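/- arXiv:1911.02820 — 3 statements merged into one kernel-verified Lean document; each statement's English description precedes it below -/
import Mathlib

section
/- Let d ∈ {2,3}, c ∈ ℝ, and let ψ : ℝ^d → ℂ be a C² solution of the Gross–Pitaevskii traveling wave equation with speed c. Then ψ is C^∞, |ψ(x)| ≤ √(1 + c²/4) for all x ∈ ℝ^d, and for every k ∈ ℕ there exists a constant C_k > 0, depending only on d, k and c, such that the norm of the k-th derivative satisfies ‖D^k ψ(x)‖ ≤ C_k for all x ∈ ℝ^d. -/
open MeasureTheory Filter Complex Metric Topology

noncomputable section

abbrev Ed (d : ℕ) := EuclideanSpace ℝ (Fin d)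

/-- Partial derivative of `ψ` in the `i`-th coordinate direction. -/
def pd {d : ℕ} (ψ : Ed d → ℂ) (i : Fin d) (x : Ed d) : ℂ :=
  fderiv ℝ ψ x (EuclideanSpace.single i 1)

/-- Laplacian of `ψ`. -/
def lap {d : ℕ} (ψ : Ed d → ℂ) (x : Ed d) : ℂ :=
  ∑ i : Fin d, fderiv ℝ (fun y => fderiv ℝ ψ y (EuclideanSpace.single i 1)) x
      (EuclideanSpace.single i 1)

/-- The Gross–Pitaevskii traveling wave equation with speed `c` on `ℝ^d`:
`ic ∂_{x₁}ψ + Δψ + (1 - |ψ|²)ψ = 0`. -/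
def GPeq {d : ℕ} [NeZero d] (c : ℝ) (ψ : Ed d → ℂ) : Prop :=
  ∀ x, Complex.I * (c : ℂ) * pd ψ 0 x + lap ψ x + (1 - (‖ψ x‖ : ℂ) ^ 2) * ψ x = 0

/-- `|∇ψ|²`. -/
def gradSq {d : ℕ} (ψ : Ed d → ℂ) (x : Ed d) : ℝ := ∑ i : Fin d, ‖pd ψ i x‖ ^ 2

/-- Energy density `(1/2)|∇ψ|² + (1/4)(1 - |ψ|²)²`. -/
def eDen {d : ℕ} (ψ : Ed d → ℂ) (x : Ed d) : ℝ :=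
  1 / 2 * gradSq ψ x + 1 / 4 * (1 - ‖ψ x‖ ^ 2) ^ 2

/-- Energy `E(ψ)`. -/
def energy {d : ℕ} (ψ : Ed d → ℂ) : ℝ := ∫ x, eDen ψ x

/-- Finite energy. -/
def FiniteEnergy {d : ℕ} (ψ : Ed d → ℂ) : Prop := Integrable (eDen ψ)

/-- Momentum `P(ψ) = -∫ ∂_{x₁}(Im ψ)(Re ψ - 1)`. -/
def mom {d : ℕ} [NeZero d] (ψ : Ed d → ℂ) : ℝ :=
  -∫ x, (pd ψ 0 x).im * ((ψ x).re - 1)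

/-- Lagrangian `I^c(ψ) = E(ψ) - c P(ψ)`. -/
def lagr {d : ℕ} [NeZero d] (c : ℝ) (ψ : Ed d → ℂ) : ℝ := energy ψ - c * mom ψ

/-- `ψ` is not a constant of modulus 1. -/
def Nontriv {d : ℕ} (ψ : Ed d → ℂ) : Prop := ¬∃ z : ℂ, ‖z‖ = 1 ∧ ψ = fun _ => z

/-- The quadratic form `Q` of the second variation of `I^c` at `ψ`:
`Q(φ) = ∫ |∇φ|² - c⟨φ, i∂₁φ⟩ - (1-|ψ|²)|φ|² + 2⟨φ,ψ⟩²` with `⟨z₁,z₂⟩ = Re (z₁ conj z₂)`. -/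
def Qform {d : ℕ} [NeZero d] (c : ℝ) (ψ φ : Ed d → ℂ) : ℝ :=
  ∫ x, (gradSq φ x - c * (φ x * (starRingEnd ℂ) (Complex.I * pd φ 0 x)).re
    - (1 - ‖ψ x‖ ^ 2) * ‖φ x‖ ^ 2 + 2 * ((φ x * (starRingEnd ℂ) (ψ x)).re) ^ 2)

/-- The Morse index of `ψ` is at most `m`: every subspace of smooth compactly supported
functions on which `Q` is negative definite has dimension at most `m`. -/
def MorseIndexLE {d : ℕ} [NeZero d] (c : ℝ) (ψ : Ed d → ℂ) (m : ℕ) : Prop :=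
  ∀ Y : Submodule ℝ (Ed d → ℂ),
    (∀ φ ∈ Y, ContDiff ℝ (⊤ : ℕ∞) φ ∧ HasCompactSupport φ) →
    (∀ φ ∈ Y, φ ≠ 0 → Qform c ψ φ < 0) → Module.rank ℝ Y ≤ m

/-- `C^k_loc` convergence: uniform convergence of all iterated derivatives on every
compact set. -/
def LocCk {d : ℕ} (ψn : ℕ → Ed d → ℂ) (ψ : Ed d → ℂ) : Prop :=
  ∀ (k : ℕ) (K : Set (Ed d)), IsCompact K →
    TendstoUniformlyOn (fun n => iteratedFDeriv ℝ k (ψn n)) (iteratedFDeriv ℝ k ψ) atTop K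

/-!
The factor `e^{icx₁/2}` turns a solution `ψ` into `φ = e^{icx₁/2} ψ` with
`Δφ = -(A - |φ|²) φ`, `A = 1 + c²/4`, and `|φ| = |ψ|` (`gauge_eq`): the first-order term is gone.

*A priori bound.* `ρ = |φ|²` satisfies `Δρ ≥ 2ρ(ρ - A)`. Comparison with the Keller–Osserman
supersolution `const · R² (R² - |x - x₀|²)⁻²` on balls of radius `R → ∞` gives `ρ ≤ A`
(`norm_sq_le`).

*Derivatives.* The maximum principle on a half ball, applied to the part of `v` that is odd in one
variable, shows that `|v| ≤ M` and `|Δv| ≤ M` on the whole space imply `|∂ᵢv| ≤ (d + 1) M`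
(`norm_pd_le`). This is the only elliptic estimate needed. It extends to pairs `(u, f)` that are
uniform limits of pairs `(v, Δv)` with `v` of class `C²` (`IsLapLimit`). Such pairs are stable under
differentiation when the derivatives of `u` and `f` are uniformly continuous, because the difference
quotients then converge uniformly (`IsLapLimit.pd`). By induction, `u` has one more bounded uniformly
continuous derivative than `f` (`IsLapLimit.regularity`). As `f = -(A - |φ|²) φ` has as many
derivatives as `φ`, with bounds depending only on those of `φ`, a bootstrap controls all derivatives
of `φ`, hence of `ψ`. The argument works in every dimension `d ≥ 1`.
-/

/-! ### Derivatives along coordinate lines -/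

section helpers

variable {d : ℕ}

/-- Second-derivative test: at a local maximum the second derivative is nonpositive. -/
theorem second_deriv_nonpos {f a : ℝ → ℝ} {b : ℝ} (hmax : IsLocalMax f 0)
    (hf : ∀ᶠ t in 𝓝 (0 : ℝ), HasDerivAt f (a t) t) (ha : HasDerivAt a b 0) : b ≤ 0 := by
  by_contra! hb
  have hda : deriv f =ᶠ[𝓝 0] a := hf.mono fun t ht => ht.deriv
  have hdd : deriv (deriv f) 0 = b := (hda.deriv_eq).trans ha.deriv
  have hmin := isLocalMin_of_deriv_deriv_pos (hdd ▸ hb) hmax.deriv_eq_zero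
    hf.self_of_nhds.continuousAt
  -- a point that is both a local minimum and a local maximum: `f` is locally constant
  have hc : f =ᶠ[𝓝 0] fun _ => f 0 := by
    filter_upwards [hmin, hmax] with t h1 h2 using le_antisymm h2 h1
  have h0 : deriv f =ᶠ[𝓝 0] fun _ => (0 : ℝ) := by
    filter_upwards [hc.deriv] with t ht
    simp [ht]
  have : deriv (deriv f) 0 = 0 := by simp [h0.deriv_eq]
  linarith

theorem line_hasDerivAt {u : Ed d → ℂ} (hu : Differentiable ℝ u) (p : Ed d) (j : Fin d)
    (s t : ℝ) :
    HasDerivAt (fun t : ℝ => u (p + (s * t) • EuclideanSpace.single j (1 : ℝ)))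
      (s * pd u j (p + (s * t) • EuclideanSpace.single j (1 : ℝ))) t := by
  have h1 : HasDerivAt (fun t : ℝ => p + (s * t) • (EuclideanSpace.single j (1 : ℝ) : Ed d))
      (s • EuclideanSpace.single j (1 : ℝ)) t := by
    have := (((hasDerivAt_id t).const_mul s).smul_const
      (EuclideanSpace.single j (1 : ℝ) : Ed d)).const_add p
    simpa using this
  have h2 := ((hu _).hasFDerivAt (x := p + (s * t) • EuclideanSpace.single j (1 : ℝ))).comp_hasDerivAt
    t h1
  refine h2.congr_deriv ?_
  simp [pd]

theorem line_hasDerivAt_one {u : Ed d → ℂ} (hu : Differentiable ℝ u) (p : Ed d) (j : Fin d)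
    (t : ℝ) :
    HasDerivAt (fun t : ℝ => u (p + t • EuclideanSpace.single j (1 : ℝ)))
      (pd u j (p + t • EuclideanSpace.single j (1 : ℝ))) t := by
  simpa using line_hasDerivAt hu p j 1 t

theorem contDiff_pd {u : Ed d → ℂ} {n : WithTop ℕ∞} (hu : ContDiff ℝ (n + 1) u) (i : Fin d) :
    ContDiff ℝ n (pd u i) :=
  (hu.fderiv_right le_rfl).clm_apply contDiff_const

theorem differentiable_pd {u : Ed d → ℂ} (hu : ContDiff ℝ 2 u) (i : Fin d) :
    Differentiable ℝ (pd u i) :=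
  (contDiff_pd (n := 1) (by simpa [one_add_one_eq_two] using hu) i).differentiable one_ne_zero

theorem lap_eq_sum (u : Ed d → ℂ) (x : Ed d) : lap u x = ∑ i, pd (pd u i) i x := rfl

theorem norm_sq_line (p : Ed d) (j : Fin d) (t : ℝ) :
    ‖p + t • (EuclideanSpace.single j (1 : ℝ) : Ed d)‖ ^ 2 = ‖p‖ ^ 2 + 2 * t * p j + t ^ 2 := by
  rw [norm_add_sq_real, real_inner_smul_right, norm_smul]
  simp [EuclideanSpace.inner_single_right]
  ring

theorem sq_sum_eq (p : Ed d) : ∑ j, (p j) ^ 2 = ‖p‖ ^ 2 := by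
  simp [EuclideanSpace.norm_sq_eq]

/-! ### The a priori bound -/

/-- First and second derivatives of `‖u‖²` along a coordinate line through `p`. -/
theorem normSq_line_derivs {u : Ed d → ℂ} (hu : ContDiff ℝ 2 u) (p : Ed d) (j : Fin d) :
    (∀ t : ℝ, HasDerivAt (fun t : ℝ => ‖u (p + t • EuclideanSpace.single j (1 : ℝ))‖ ^ 2)
      (2 * inner ℝ (u (p + t • EuclideanSpace.single j (1 : ℝ)))
        (pd u j (p + t • EuclideanSpace.single j (1 : ℝ)))) t) ∧
    HasDerivAt (fun t : ℝ => 2 * inner ℝ (u (p + t • EuclideanSpace.single j (1 : ℝ)))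
        (pd u j (p + t • EuclideanSpace.single j (1 : ℝ))))
      (2 * (inner ℝ (u p) (pd (pd u j) j p) + ‖pd u j p‖ ^ 2)) 0 := by
  have hd : Differentiable ℝ u := hu.differentiable two_ne_zero
  refine ⟨fun t => (line_hasDerivAt_one hd p j t).norm_sq, ?_⟩
  have h := (line_hasDerivAt_one hd p j 0).inner ℝ
    (line_hasDerivAt_one (differentiable_pd hu j) p j 0)
  simpa using h.const_mul 2

/-- The Keller–Osserman estimate. With `η = R² - ‖x - x₀‖²`, let `p` maximise
`(‖u‖² - A) η²` on the ball of radius `R` about `x₀`, with value `m`. If `m > 0`, the function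
`‖u‖² - m η⁻²` has a local maximum at `p`, and
`Δ‖u‖² ≥ 2‖u‖² (‖u‖² - A) ≥ 2 (‖u‖² - A)²` there, while
`Δ η⁻² ≤ (4d + 24) R² η⁻⁴`; this bounds `m` by `(2d + 12) R²`. -/
theorem keller_osserman {A : ℝ} (hA : 0 ≤ A) {u : Ed d → ℂ} (hu : ContDiff ℝ 2 u)
    (heq : ∀ x, lap u x = -(((A : ℂ) - (‖u x‖ : ℂ) ^ 2) * u x)) {R : ℝ} (hR : 0 < R) (x₀ : Ed d) :
    (‖u x₀‖ ^ 2 - A) * R ^ 2 ≤ 2 * d + 12 := by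
  by_contra! hcon
  set η : Ed d → ℝ := fun x => R ^ 2 - ‖x - x₀‖ ^ 2 with hη
  have hcont : Continuous fun x => (‖u x‖ ^ 2 - A) * (η x) ^ 2 := by
    have := hu.continuous
    simp only [hη]; fun_prop
  obtain ⟨p, hpK, hp⟩ := (isCompact_closedBall x₀ R).exists_isMaxOn
    ⟨x₀, mem_closedBall_self hR.le⟩ hcont.continuousOn
  set m := (‖u p‖ ^ 2 - A) * (η p) ^ 2 with hm
  have hmR : (2 * d + 12) * R ^ 2 < m := by
    have h1 : (‖u x₀‖ ^ 2 - A) * (η x₀) ^ 2 ≤ m := hp (mem_closedBall_self hR.le)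
    have h2 : η x₀ = R ^ 2 := by simp [hη]
    rw [h2] at h1
    have : 0 < R ^ 2 := by positivity
    nlinarith
  have hm0 : 0 < m := lt_of_le_of_lt (by positivity) hmR
  have hpR : ‖p - x₀‖ ≤ R := by simpa [dist_eq_norm] using hpK
  have hη0 : 0 < η p := by
    have h1 : 0 ≤ η p := by
      simp only [hη]; nlinarith [norm_nonneg (p - x₀)]
    rcases h1.eq_or_lt with h | h
    · rw [hm, ← h] at hm0; simp at hm0
    · exact h
  have hηR : η p ≤ R ^ 2 := by simp only [hη]; nlinarith [norm_nonneg (p - x₀)]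
  have hηc : Continuous η := by simp only [hη]; fun_prop
  -- `‖u‖² - A - m η⁻²` has a local maximum at `p`
  have hloc : ∀ᶠ x in 𝓝 p, ‖u x‖ ^ 2 - m * (η x ^ 2)⁻¹ ≤ ‖u p‖ ^ 2 - m * (η p ^ 2)⁻¹ := by
    filter_upwards [hηc.continuousAt.eventually (lt_mem_nhds hη0)] with x hx
    have hxK : x ∈ closedBall x₀ R := by
      simp only [mem_closedBall, dist_eq_norm]
      simp only [hη] at hx
      by_contra! h
      nlinarith
    have h1 : (‖u x‖ ^ 2 - A) * (η x) ^ 2 ≤ m := hp hxK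
    have h2 : m * (η p ^ 2)⁻¹ = ‖u p‖ ^ 2 - A := by
      rw [hm]; field_simp
    have h3 : ‖u x‖ ^ 2 - A ≤ m * (η x ^ 2)⁻¹ := by
      rw [← div_eq_mul_inv, le_div_iff₀ (by positivity)]; exact h1
    linarith
  set b : Fin d → ℝ := fun j => 2 * (inner ℝ (u p) (pd (pd u j) j p) + ‖pd u j p‖ ^ 2)
    - m * (24 * ((p - x₀) j) ^ 2 * (η p ^ 4)⁻¹ + 4 * (η p ^ 3)⁻¹) with hb
  have hbj : ∀ j, b j ≤ 0 := by
    intro j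
    have hline : Continuous fun t : ℝ => p + t • (EuclideanSpace.single j (1 : ℝ) : Ed d) := by
      fun_prop
    have hηl : ∀ t : ℝ, η (p + t • (EuclideanSpace.single j (1 : ℝ) : Ed d))
        = η p - 2 * t * (p - x₀) j - t ^ 2 := by
      intro t
      simp only [hη]
      rw [add_sub_right_comm, norm_sq_line]; ring
    have hηd : ∀ t : ℝ, HasDerivAt (fun t : ℝ => η (p + t • (EuclideanSpace.single j (1 : ℝ) : Ed d)))
        (- 2 * (p - x₀) j - 2 * t) t := by
      intro t
      simp only [hηl]
      have := (((hasDerivAt_id t).const_mul 2).mul_const ((p - x₀) j)).const_sub (η p)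
      refine (this.sub (hasDerivAt_pow 2 t)).congr_deriv ?_
      norm_num
    have ht0 : Tendsto (fun t : ℝ => p + t • (EuclideanSpace.single j (1 : ℝ) : Ed d)) (𝓝 0) (𝓝 p) := by
      simpa using hline.tendsto 0
    refine second_deriv_nonpos
      (f := fun t : ℝ => ‖u (p + t • EuclideanSpace.single j (1 : ℝ))‖ ^ 2
        - m * (η (p + t • EuclideanSpace.single j (1 : ℝ)) ^ 2)⁻¹)
      (a := fun t : ℝ => 2 * inner ℝ (u (p + t • EuclideanSpace.single j (1 : ℝ)))
        (pd u j (p + t • EuclideanSpace.single j (1 : ℝ)))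
        - m * (-2 * (- 2 * (p - x₀) j - 2 * t) * (η (p + t • EuclideanSpace.single j (1 : ℝ)) ^ 3)⁻¹)) ?_ ?_ ?_
    · have := ht0.eventually hloc
      filter_upwards [this] with t ht
      simpa using ht
    · have h1 : ∀ᶠ t in 𝓝 (0 : ℝ), 0 < η (p + t • (EuclideanSpace.single j (1 : ℝ) : Ed d)) :=
        ht0.eventually (hηc.continuousAt.eventually (lt_mem_nhds hη0))
      filter_upwards [h1] with t ht
      refine ((normSq_line_derivs hu p j).1 t).sub (HasDerivAt.const_mul m ?_)
      refine (((hηd t).fun_pow 2).fun_inv (by positivity)).congr_deriv ?_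
      field_simp
      norm_num
      ring
    · refine ((normSq_line_derivs hu p j).2).sub (HasDerivAt.const_mul m ?_)
      have h2 : HasDerivAt (fun t : ℝ => -2 * (- 2 * (p - x₀) j - 2 * t)) 4 0 := by
        have := (((hasDerivAt_id (0 : ℝ)).const_mul 2).const_sub (- 2 * (p - x₀) j)).const_mul (-2)
        exact this.congr_deriv (by norm_num)
      have h0 : η (p + (0 : ℝ) • (EuclideanSpace.single j (1 : ℝ) : Ed d)) = η p := by simp
      refine (h2.fun_mul (((hηd 0).fun_pow 3).fun_inv (by rw [h0]; positivity))).congr_deriv ?_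
      simp only [h0]
      field_simp
      norm_num
      ring
  have hsum : ∑ j, b j ≤ 0 := Finset.sum_nonpos fun j _ => hbj j
  have hlap : ∑ j, (inner ℝ (u p) (pd (pd u j) j p) : ℝ) = ‖u p‖ ^ 2 * (‖u p‖ ^ 2 - A) := by
    rw [← inner_sum, ← lap_eq_sum, heq]
    have : -(((A : ℂ) - (‖u p‖ : ℂ) ^ 2) * u p) = (‖u p‖ ^ 2 - A) • u p := by
      rw [Complex.real_smul]; push_cast; ring
    rw [this, real_inner_smul_right, real_inner_self_eq_norm_sq]; ring
  have hgrad : 0 ≤ ∑ j, ‖pd u j p‖ ^ 2 := by positivity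
  have hbs : ∑ j, b j = 2 * (‖u p‖ ^ 2 * (‖u p‖ ^ 2 - A) + ∑ j, ‖pd u j p‖ ^ 2)
      - m * (24 * ‖p - x₀‖ ^ 2 * (η p ^ 4)⁻¹ + d * (4 * (η p ^ 3)⁻¹)) := by
    simp only [hb, Finset.sum_sub_distrib, ← Finset.mul_sum, Finset.sum_add_distrib, hlap,
      ← Finset.sum_mul, sq_sum_eq, Finset.sum_const, Finset.card_univ, Fintype.card_fin,
      nsmul_eq_mul]
    ring
  rw [hbs] at hsum
  have hw : ‖u p‖ ^ 2 - A = m * (η p ^ 2)⁻¹ := by rw [hm]; field_simp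
  have hw0 : 0 < m * (η p ^ 2)⁻¹ := by positivity
  have hr : ‖p - x₀‖ ^ 2 ≤ R ^ 2 := by gcongr
  have key : 2 * (m * (η p ^ 2)⁻¹) ^ 2 ≤
      m * (24 * R ^ 2 * (η p ^ 4)⁻¹ + d * (4 * (R ^ 2 * (η p ^ 4)⁻¹))) := by
    have h1 : (η p ^ 3)⁻¹ ≤ R ^ 2 * (η p ^ 4)⁻¹ := by
      have : (η p ^ 3)⁻¹ = η p * (η p ^ 4)⁻¹ := by field_simp
      rw [this]; gcongr
    have h2 : m * (24 * ‖p - x₀‖ ^ 2 * (η p ^ 4)⁻¹ + d * (4 * (η p ^ 3)⁻¹)) ≤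
        m * (24 * R ^ 2 * (η p ^ 4)⁻¹ + d * (4 * (R ^ 2 * (η p ^ 4)⁻¹))) := by gcongr
    rw [← hw] at hw0 ⊢
    nlinarith
  have h5 : 2 * (m * (η p ^ 2)⁻¹) ^ 2 = 2 * m * m * (η p ^ 4)⁻¹ := by
    field_simp
  have h6 : m * (24 * R ^ 2 * (η p ^ 4)⁻¹ + d * (4 * (R ^ 2 * (η p ^ 4)⁻¹)))
      = 2 * m * ((2 * d + 12) * R ^ 2) * (η p ^ 4)⁻¹ := by ring
  rw [h5, h6] at key
  have : 2 * m * ((2 * d + 12) * R ^ 2) * (η p ^ 4)⁻¹ < 2 * m * m * (η p ^ 4)⁻¹ := by gcongr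
  linarith

/-- The a priori bound, obtained from `keller_osserman` as `R → ∞`. -/
theorem norm_sq_le {A : ℝ} (hA : 0 ≤ A) {u : Ed d → ℂ} (hu : ContDiff ℝ 2 u)
    (heq : ∀ x, lap u x = -(((A : ℂ) - (‖u x‖ : ℂ) ^ 2) * u x)) (x : Ed d) : ‖u x‖ ^ 2 ≤ A := by
  by_contra! h
  have h1 : Tendsto (fun R : ℝ => (‖u x‖ ^ 2 - A) * R ^ 2) atTop atTop :=
    (tendsto_pow_atTop two_ne_zero).const_mul_atTop (by linarith)
  obtain ⟨R, hR, hR0⟩ := ((h1.eventually_gt_atTop (2 * d + 12)).and (eventually_gt_atTop 0)).exists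
  linarith [keller_osserman hA hu heq hR0 x]

/-! ### The gradient estimate -/

/-- The odd part `w` of `v(x₀ + ·)` in the variable `xᵢ`, paired with `ζ`, lies below the barrier
`M (‖x‖² + (d + 1) xᵢ (1 - xᵢ))` on the half ball `‖x‖ ≤ 1`, `xᵢ ≥ 0`. The barrier has Laplacian
`-2M`, so the difference cannot have an interior maximum; on the boundary the inequality is direct. -/
theorem half_ball_barrier {M : ℝ} (hM : 0 < M) {v : Ed d → ℂ} (hv : ContDiff ℝ 2 v)
    (hb : ∀ x, ‖v x‖ ≤ M) (hl : ∀ x, ‖lap v x‖ ≤ M) (x₀ : Ed d) (i : Fin d) {ζ : ℂ}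
    (hζ : ‖ζ‖ ≤ 1) {x : Ed d} (hx1 : ‖x‖ ≤ 1) (hxi : 0 ≤ x i) :
    (inner ℝ ζ (v (x₀ + x)) - inner ℝ ζ (v (x₀ + (x - (2 * x i) • EuclideanSpace.single i (1 : ℝ))))) / 2
      ≤ M * (‖x‖ ^ 2 + (d + 1) * (x i - x i ^ 2)) := by
  have hd : Differentiable ℝ v := hv.differentiable two_ne_zero
  have hinner : ∀ z : ℂ, ‖z‖ ≤ M → |(inner ℝ ζ z : ℝ)| ≤ M := fun z hz =>
    (abs_real_inner_le_norm ζ z).trans (by nlinarith [norm_nonneg ζ, norm_nonneg z])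
  set σ : Ed d → Ed d := fun x => x - (2 * x i) • EuclideanSpace.single i (1 : ℝ) with hσ
  set z : Ed d → ℝ := fun x => (inner ℝ ζ (v (x₀ + x)) - inner ℝ ζ (v (x₀ + σ x))) / 2
    - M * (‖x‖ ^ 2 + (d + 1) * (x i - x i ^ 2)) with hz
  set K : Set (Ed d) := closedBall 0 1 ∩ {x | 0 ≤ x i} with hK
  have hci : Continuous fun x : Ed d => x i := by fun_prop
  have hKc : IsCompact K :=
    (isCompact_closedBall 0 1).inter_right (isClosed_le continuous_const hci)
  have hzc : Continuous z := by
    have := hv.continuous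
    simp only [hz, hσ]
    fun_prop
  have hxK : x ∈ K := ⟨by simpa using hx1, hxi⟩
  obtain ⟨p, ⟨hp1, hpi⟩, hp⟩ := hKc.exists_isMaxOn ⟨x, hxK⟩ hzc.continuousOn
  replace hp1 : ‖p‖ ≤ 1 := by simpa using hp1
  replace hpi : 0 ≤ p i := hpi
  suffices hzp : z p ≤ 0 by
    have := (hp hxK : z x ≤ z p).trans hzp
    simp only [hz] at this
    linarith
  by_contra! hpos
  have hpi1 : p i ≤ 1 := (le_abs_self _).trans ((PiLp.norm_apply_le p i).trans hp1)
  -- on the flat part of the boundary the odd part of `v` vanishes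
  have hpi0 : 0 < p i := by
    rcases hpi.eq_or_lt with h | h
    · have : z p = - (M * ‖p‖ ^ 2) := by
        simp [hz, hσ, ← h]
      have : 0 ≤ M * ‖p‖ ^ 2 := by positivity
      linarith
    · exact h
  -- on the spherical part the barrier is at least `M`
  have hp1' : ‖p‖ < 1 := by
    rcases hp1.eq_or_lt with h | h
    · have h1 := abs_le.1 (hinner _ (hb (x₀ + p)))
      have h2 := abs_le.1 (hinner _ (hb (x₀ + σ p)))
      have h3 : 0 ≤ M * ((d + 1) * (p i - p i ^ 2)) := by
        have : 0 ≤ p i - p i ^ 2 := by nlinarith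
        positivity
      simp only [hz, h] at hpos
      nlinarith
    · exact h
  have hnear : ∀ᶠ y in 𝓝 p, z y ≤ z p := by
    filter_upwards [continuous_norm.continuousAt.eventually (gt_mem_nhds hp1'),
      hci.continuousAt.eventually (lt_mem_nhds hpi0)] with y h1 h2
    exact hp ⟨by simpa using h1.le, h2.le⟩
  -- `s j` is the effect of the reflection `σ` on the `j`-th axis
  set s : Fin d → ℝ := fun j => if j = i then -1 else 1 with hs
  have hss : ∀ j, s j * s j = 1 := by intro j; simp only [hs]; split_ifs <;> norm_num
  set δ : Fin d → ℝ := fun j => if j = i then 1 else 0 with hδ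
  have hbj : ∀ j, (inner ℝ ζ (pd (pd v j) j (x₀ + p)) - inner ℝ ζ (pd (pd v j) j (x₀ + σ p))) / 2
      - M * (2 - (d + 1) * (2 * δ j)) ≤ 0 := by
    intro j
    have hli : ∀ t : ℝ, (p + t • (EuclideanSpace.single j (1 : ℝ) : Ed d)) i = p i + t * δ j := by
      intro t
      simp [hδ, eq_comm]
    have hlσ : ∀ t : ℝ, σ (p + t • (EuclideanSpace.single j (1 : ℝ) : Ed d))
        = σ p + (s j * t) • EuclideanSpace.single j (1 : ℝ) := by
      intro t
      simp only [hσ, hli, hs, hδ]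
      split_ifs with h
      · subst h; module
      · module
    have hline : Continuous fun t : ℝ => p + t • (EuclideanSpace.single j (1 : ℝ) : Ed d) := by
      fun_prop
    have ht0 : Tendsto (fun t : ℝ => p + t • (EuclideanSpace.single j (1 : ℝ) : Ed d)) (𝓝 0) (𝓝 p) := by
      simpa using hline.tendsto 0
    have hform : ∀ t : ℝ, z (p + t • (EuclideanSpace.single j (1 : ℝ) : Ed d)) =
        (inner ℝ ζ (v ((x₀ + p) + (1 * t) • EuclideanSpace.single j (1 : ℝ)))
          - inner ℝ ζ (v ((x₀ + σ p) + (s j * t) • EuclideanSpace.single j (1 : ℝ)))) / 2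
        - M * ((‖p‖ ^ 2 + 2 * t * p j + t ^ 2)
            + (d + 1) * ((p i + t * δ j) - (p i + t * δ j) ^ 2)) := by
      intro t
      simp only [hz, hlσ, hli, norm_sq_line, one_mul, add_assoc]
    have hδδ : δ j * δ j = δ j := by simp only [hδ]; split_ifs <;> norm_num
    refine second_deriv_nonpos (f := fun t : ℝ => z (p + t • EuclideanSpace.single j (1 : ℝ)))
      (a := fun t : ℝ => (inner ℝ ζ (1 * pd v j ((x₀ + p) + (1 * t) • EuclideanSpace.single j (1 : ℝ)))
          - inner ℝ ζ (s j * pd v j ((x₀ + σ p) + (s j * t) • EuclideanSpace.single j (1 : ℝ)))) / 2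
        - M * ((2 * p j + 2 * t) + (d + 1) * (δ j - 2 * (p i + t * δ j) * δ j))) ?_ ?_ ?_
    · filter_upwards [ht0.eventually hnear] with t ht
      simpa using ht
    · refine Eventually.of_forall fun t => ?_
      simp only [hform]
      have hA := (hasDerivAt_const t ζ).inner ℝ (line_hasDerivAt hd (x₀ + p) j 1 t)
      have hB := (hasDerivAt_const t ζ).inner ℝ (line_hasDerivAt hd (x₀ + σ p) j (s j) t)
      have hC : HasDerivAt (fun t : ℝ => ‖p‖ ^ 2 + 2 * t * p j + t ^ 2) (2 * p j + 2 * t) t := by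
        have h1 := (((hasDerivAt_id t).const_mul 2).mul_const (p j)).const_add (‖p‖ ^ 2)
        exact (h1.fun_add (hasDerivAt_pow 2 t)).congr_deriv (by norm_num)
      have hD : HasDerivAt (fun t : ℝ => p i + t * δ j) (δ j) t := by
        simpa using ((hasDerivAt_id t).mul_const (δ j)).const_add (p i)
      have hE := (hD.fun_sub (hD.fun_pow 2)).const_mul ((d : ℝ) + 1)
      refine (((hA.fun_sub hB).div_const 2).fun_sub ((hC.fun_add hE).const_mul M)).congr_deriv ?_
      simp
    · have hA := (hasDerivAt_const (0 : ℝ) ζ).inner ℝ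
        ((line_hasDerivAt (differentiable_pd hv j) (x₀ + p) j 1 0).const_mul ((1 : ℝ) : ℂ))
      have hB := (hasDerivAt_const (0 : ℝ) ζ).inner ℝ
        ((line_hasDerivAt (differentiable_pd hv j) (x₀ + σ p) j (s j) 0).const_mul ((s j : ℝ) : ℂ))
      have hC : HasDerivAt (fun t : ℝ => 2 * p j + 2 * t) 2 0 := by
        simpa using ((hasDerivAt_id (0 : ℝ)).const_mul 2).const_add (2 * p j)
      have hD : HasDerivAt (fun t : ℝ => p i + t * δ j) (δ j) 0 := by
        simpa using ((hasDerivAt_id (0 : ℝ)).mul_const (δ j)).const_add (p i)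
      have hE := (((hD.const_mul 2).mul_const (δ j)).const_sub (δ j)).const_mul ((d : ℝ) + 1)
      have hF := (((hA.fun_sub hB).div_const 2).fun_sub ((hC.fun_add hE).const_mul M))
      simp only [Complex.ofReal_one] at hF
      refine hF.congr_deriv ?_
      have hsc : (s j : ℂ) * ((s j : ℂ) * pd (pd v j) j (x₀ + σ p)) = pd (pd v j) j (x₀ + σ p) := by
        rw [← mul_assoc]; norm_cast; simp [hss]
      simp only [mul_zero, zero_smul, add_zero, one_mul, hsc, inner_zero_left,
        mul_assoc, hδδ]
      ring
  have hsum := Finset.sum_nonpos fun j (_ : j ∈ Finset.univ) => hbj j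
  have hδs : ∑ j, δ j = 1 := by simp [hδ]
  simp only [Finset.sum_sub_distrib, ← Finset.sum_div, ← Finset.mul_sum, ← inner_sum, hδs,
    ← lap_eq_sum, Finset.sum_const, Finset.card_univ, Fintype.card_fin, nsmul_eq_mul] at hsum
  have h1 := abs_le.1 (hinner _ (hl (x₀ + p)))
  have h2 := abs_le.1 (hinner _ (hl (x₀ + σ p)))
  nlinarith

theorem inner_pd_le {M : ℝ} (hM : 0 < M) {v : Ed d → ℂ} (hv : ContDiff ℝ 2 v)
    (hb : ∀ x, ‖v x‖ ≤ M) (hl : ∀ x, ‖lap v x‖ ≤ M) (x₀ : Ed d) (i : Fin d) {ζ : ℂ}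
    (hζ : ‖ζ‖ ≤ 1) : inner ℝ ζ (pd v i x₀) ≤ (d + 1) * M := by
  have hd : Differentiable ℝ v := hv.differentiable two_ne_zero
  -- compare the derivatives at `0` of the two sides of the barrier inequality on the `i`-th axis
  set g : ℝ → ℝ := fun t => M * (t ^ 2 + (d + 1) * (t - t ^ 2)) -
    (inner ℝ ζ (v (x₀ + (1 * t) • EuclideanSpace.single i (1 : ℝ)))
      - inner ℝ ζ (v (x₀ + ((-1) * t) • EuclideanSpace.single i (1 : ℝ)))) / 2 with hg
  have hg' : HasDerivAt g (M * (d + 1) - inner ℝ ζ (pd v i x₀)) 0 := by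
    have hA := (hasDerivAt_const (0 : ℝ) ζ).inner ℝ (line_hasDerivAt hd x₀ i 1 0)
    have hB := (hasDerivAt_const (0 : ℝ) ζ).inner ℝ (line_hasDerivAt hd x₀ i (-1) 0)
    have hC := (hasDerivAt_pow 2 (0 : ℝ)).fun_add
      (((hasDerivAt_id (0 : ℝ)).fun_sub (hasDerivAt_pow 2 (0 : ℝ))).const_mul ((d : ℝ) + 1))
    refine ((hC.const_mul M).fun_sub ((hA.fun_sub hB).div_const 2)).congr_deriv ?_
    simp
    ring
  have hg0 : g 0 = 0 := by simp [hg]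
  have hgn : ∀ t ∈ Set.Ioc (0 : ℝ) 1, 0 ≤ g t := by
    intro t ht
    have h1 : ‖t • (EuclideanSpace.single i (1 : ℝ) : Ed d)‖ = t := by
      simp [norm_smul, abs_of_pos ht.1]
    have h2 : (t • (EuclideanSpace.single i (1 : ℝ) : Ed d)) i = t := by simp
    have := half_ball_barrier hM hv hb hl x₀ i hζ (x := t • EuclideanSpace.single i (1 : ℝ))
      (by rw [h1]; exact ht.2) (by rw [h2]; exact ht.1.le)
    rw [h1, h2] at this
    have h3 : t • (EuclideanSpace.single i (1 : ℝ) : Ed d) - (2 * t) • EuclideanSpace.single i (1 : ℝ)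
        = (-1 * t) • EuclideanSpace.single i (1 : ℝ) := by module
    rw [h3] at this
    simp only [hg, one_mul]
    linarith
  have hlim := hg'.tendsto_slope_zero_right
  have : 0 ≤ M * (d + 1) - inner ℝ ζ (pd v i x₀) := by
    refine ge_of_tendsto hlim ?_
    filter_upwards [Ioc_mem_nhdsGT (zero_lt_one' ℝ)] with t ht
    have := hgn t ht
    simp only [zero_add, hg0, sub_zero, smul_eq_mul]
    exact mul_nonneg (inv_nonneg.2 ht.1.le) this
  linarith

/-- Gradient estimate: a bounded function with bounded Laplacian has bounded gradient. -/
theorem norm_pd_le {M : ℝ} (hM : 0 < M) {v : Ed d → ℂ} (hv : ContDiff ℝ 2 v)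
    (hb : ∀ x, ‖v x‖ ≤ M) (hl : ∀ x, ‖lap v x‖ ≤ M) (x₀ : Ed d) (i : Fin d) :
    ‖pd v i x₀‖ ≤ (d + 1) * M := by
  rcases eq_or_ne (pd v i x₀) 0 with h | h
  · rw [h, norm_zero]; positivity
  have hn : ‖pd v i x₀‖ ≠ 0 := norm_ne_zero_iff.2 h
  have := inner_pd_le hM hv hb hl x₀ i (ζ := ‖pd v i x₀‖⁻¹ • pd v i x₀)
    (by rw [norm_smul, norm_inv, norm_norm, inv_mul_cancel₀ hn])
  rwa [real_inner_smul_left, real_inner_self_eq_norm_sq, sq, inv_mul_cancel_left₀ hn] at this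

/-! ### Calculus of partial derivatives -/

theorem pd_sub {u v : Ed d → ℂ} (hu : Differentiable ℝ u) (hv : Differentiable ℝ v) (i : Fin d) :
    pd (fun x => u x - v x) i = fun x => pd u i x - pd v i x := by
  ext x
  simp [pd, fderiv_fun_sub (hu x) (hv x)]

theorem pd_add {u v : Ed d → ℂ} (hu : Differentiable ℝ u) (hv : Differentiable ℝ v) (i : Fin d) :
    pd (fun x => u x + v x) i = fun x => pd u i x + pd v i x := by
  ext x
  simp [pd, fderiv_fun_add (hu x) (hv x)]

theorem pd_mul {u v : Ed d → ℂ} (hu : Differentiable ℝ u) (hv : Differentiable ℝ v) (i : Fin d) :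
    pd (fun x => u x * v x) i = fun x => u x * pd v i x + v x * pd u i x := by
  ext x
  simp [pd, fderiv_fun_mul (hu x) (hv x)]

theorem pd_const_mul {u : Ed d → ℂ} (hu : Differentiable ℝ u) (a : ℂ) (i : Fin d) :
    pd (fun x => a * u x) i = fun x => a * pd u i x := by
  ext x
  simp [pd, fderiv_const_mul (hu x)]

theorem pd_comp_add (u : Ed d → ℂ) (h : Ed d) (i : Fin d) :
    pd (fun x => u (x + h)) i = fun x => pd u i (x + h) := by
  ext x
  simp [pd, fderiv_comp_add_right]

theorem pd_conj {u : Ed d → ℂ} (hu : Differentiable ℝ u) (i : Fin d) :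
    pd (fun x => (starRingEnd ℂ) (u x)) i = fun x => (starRingEnd ℂ) (pd u i x) := by
  ext x
  have := (Complex.conjCLE.toContinuousLinearMap.hasFDerivAt.comp x (hu x).hasFDerivAt).fderiv
  have h2 : (fun x => (starRingEnd ℂ) (u x)) = Complex.conjCLE.toContinuousLinearMap ∘ u := rfl
  rw [pd, h2, this]
  simp [pd]

theorem lap_sub {u v : Ed d → ℂ} (hu : ContDiff ℝ 2 u) (hv : ContDiff ℝ 2 v) (x : Ed d) :
    lap (fun x => u x - v x) x = lap u x - lap v x := by
  simp only [lap_eq_sum, ← Finset.sum_sub_distrib,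
    pd_sub (hu.differentiable two_ne_zero) (hv.differentiable two_ne_zero),
    pd_sub (differentiable_pd hu _) (differentiable_pd hv _)]

theorem lap_const_mul {u : Ed d → ℂ} (hu : ContDiff ℝ 2 u) (a : ℂ) (x : Ed d) :
    lap (fun x => a * u x) x = a * lap u x := by
  simp only [lap_eq_sum, Finset.mul_sum,
    pd_const_mul (hu.differentiable two_ne_zero), pd_const_mul (differentiable_pd hu _)]

theorem lap_comp_add (u : Ed d → ℂ) (h x : Ed d) :
    lap (fun x => u (x + h)) x = lap u (x + h) := by
  simp only [lap_eq_sum, pd_comp_add]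

/-- The full derivative, reassembled from the partial derivatives. -/
theorem fderiv_eq_sum (u : Ed d → ℂ) : fderiv ℝ u = fun x => ∑ i : Fin d,
    ContinuousLinearMap.smulRightL ℝ (Ed d) ℂ (EuclideanSpace.proj i) (pd u i x) := by
  ext x y
  have hy : y = ∑ i, y i • (EuclideanSpace.single i (1 : ℝ) : Ed d) := by
    ext j
    simp [Finset.sum_apply, Pi.single_apply]
  conv_lhs => rw [hy]
  simp [pd, ContinuousLinearMap.smulRightL_apply_apply]

/-- A constant with `‖Du‖ ≤ Λ sup_i ‖∂_i u‖`. -/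
def gradConst (d : ℕ) : ℝ :=
  ∑ i : Fin d, ‖ContinuousLinearMap.smulRightL ℝ (Ed d) ℂ (EuclideanSpace.proj i)‖

theorem gradConst_nonneg (d : ℕ) : 0 ≤ gradConst d := by
  unfold gradConst
  positivity

theorem norm_fderiv_le {u : Ed d → ℂ} {x : Ed d} {B : ℝ} (h : ∀ i, ‖pd u i x‖ ≤ B) :
    ‖fderiv ℝ u x‖ ≤ gradConst d * B := by
  rw [fderiv_eq_sum, gradConst, Finset.sum_mul]
  exact (norm_sum_le _ _).trans (Finset.sum_le_sum fun i _ =>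
    (ContinuousLinearMap.le_opNorm _ _).trans (by gcongr; exact h i))

/-- A function with bounded partial derivatives is Lipschitz. -/
theorem uniformContinuous_of_pd {u : Ed d → ℂ} (hu : Differentiable ℝ u) {B : ℝ}
    (h : ∀ i x, ‖pd u i x‖ ≤ B) : UniformContinuous u := by
  refine (lipschitzWith_of_nnnorm_fderiv_le (C := (gradConst d * |B|).toNNReal) hu
    fun x => ?_).uniformContinuous
  rw [← NNReal.coe_le_coe, coe_nnnorm, Real.coe_toNNReal _
    (mul_nonneg (gradConst_nonneg d) (abs_nonneg B))]
  exact norm_fderiv_le fun i => (h i x).trans (le_abs_self B)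

/-- If `∂ᵢu` is uniformly continuous, the difference quotients of `u` along the `i`-th axis converge
to it uniformly on the whole space. -/
theorem exists_diffQuot_close {u : Ed d → ℂ} (hu : Differentiable ℝ u) (i : Fin d)
    (hc : UniformContinuous (pd u i)) {ε : ℝ} (hε : 0 < ε) :
    ∃ δ > 0, ∀ h : ℝ, 0 < h → h < δ → ∀ x,
      ‖pd u i x - (h : ℂ)⁻¹ * (u (x + h • EuclideanSpace.single i (1 : ℝ)) - u x)‖ ≤ ε := by
  obtain ⟨δ, hδ, H⟩ := Metric.uniformContinuous_iff.1 hc ε hε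
  refine ⟨δ, hδ, fun h hh hhδ x => ?_⟩
  have key := norm_image_sub_le_of_norm_deriv_le_segment'
    (f := fun t : ℝ => u (x + t • EuclideanSpace.single i (1 : ℝ)) - t • pd u i x)
    (f' := fun t : ℝ => pd u i (x + t • EuclideanSpace.single i (1 : ℝ)) - pd u i x)
    (a := 0) (b := h) (C := ε)
    (fun t _ => by
      have h2 : HasDerivAt (fun t : ℝ => t • pd u i x) (pd u i x) t := by
        simpa using (hasDerivAt_id t).smul_const (pd u i x)
      exact ((line_hasDerivAt_one hu x i t).fun_sub h2).hasDerivWithinAt)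
    (fun t ht => by
      rw [← dist_eq_norm]
      refine (H ?_).le
      rw [dist_eq_norm, add_sub_cancel_left, norm_smul, Real.norm_of_nonneg ht.1]
      simpa using ht.2.trans hhδ) h ⟨hh.le, le_rfl⟩
  simp only [zero_smul, add_zero, sub_zero, Complex.real_smul] at key
  have hh0 : (h : ℂ) ≠ 0 := by exact_mod_cast hh.ne'
  have e : pd u i x - (h : ℂ)⁻¹ * (u (x + h • EuclideanSpace.single i (1 : ℝ)) - u x)
      = -(h : ℂ)⁻¹ * (u (x + h • EuclideanSpace.single i (1 : ℝ)) - h * pd u i x - u x) := by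
    field_simp
    ring
  rw [e, norm_mul, norm_neg, norm_inv, Complex.norm_real, Real.norm_of_nonneg hh.le,
    inv_mul_le_iff₀ hh, mul_comm h]
  exact key

/-! ### A uniform-closure notion of solution of `Δu = f` -/

/-- `Δu = f` in a generalised sense: `(u, f)` is a uniform limit of pairs `(v, Δv)` with `v` of
class `C²`. -/
def IsLapLimit (u f : Ed d → ℂ) : Prop :=
  ∀ ε > 0, ∃ v : Ed d → ℂ, ContDiff ℝ 2 v ∧ (∀ x, ‖u x - v x‖ ≤ ε) ∧ ∀ x, ‖f x - lap v x‖ ≤ ε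

theorem IsLapLimit.of_contDiff {u : Ed d → ℂ} (hu : ContDiff ℝ 2 u) : IsLapLimit u (lap u) :=
  fun ε hε => ⟨u, hu, fun x => by simpa using hε.le, fun x => by simpa using hε.le⟩

theorem IsLapLimit.diffQuot {u f : Ed d → ℂ} (H : IsLapLimit u f) (a : ℂ) (h : Ed d) :
    IsLapLimit (fun x => a * (u (x + h) - u x)) (fun x => a * (f (x + h) - f x)) := by
  intro ε hε
  obtain ⟨v, hv, h1, h2⟩ := H (ε / (2 * (‖a‖ + 1))) (by positivity)
  have hvh : ContDiff ℝ 2 fun x => v (x + h) := hv.comp (contDiff_id.add contDiff_const)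
  have key : ∀ {p q p' q' : ℂ}, ‖p - p'‖ ≤ ε / (2 * (‖a‖ + 1)) → ‖q - q'‖ ≤ ε / (2 * (‖a‖ + 1)) →
      ‖a * (p - q) - a * (p' - q')‖ ≤ ε := by
    intro p q p' q' hp hq
    have e : a * (p - q) - a * (p' - q') = a * ((p - p') - (q - q')) := by ring
    rw [e, norm_mul]
    calc ‖a‖ * ‖(p - p') - (q - q')‖
        ≤ (‖a‖ + 1) * (ε / (2 * (‖a‖ + 1)) + ε / (2 * (‖a‖ + 1))) := by
          gcongr
          · linarith
          · exact (norm_sub_le _ _).trans (add_le_add hp hq)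
      _ = ε := by field_simp; ring
  refine ⟨fun x => a * (v (x + h) - v x), contDiff_const.mul (hvh.sub hv),
    fun x => key (h1 _) (h1 _), fun x => ?_⟩
  rw [lap_const_mul (hvh.sub hv), lap_sub hvh hv, lap_comp_add]
  exact key (h2 _) (h2 _)

theorem IsLapLimit.closure {u f : Ed d → ℂ}
    (H : ∀ ε > 0, ∃ u' f' : Ed d → ℂ, IsLapLimit u' f' ∧ (∀ x, ‖u x - u' x‖ ≤ ε) ∧
      ∀ x, ‖f x - f' x‖ ≤ ε) : IsLapLimit u f := by
  intro ε hε
  obtain ⟨u', f', hW, h1, h2⟩ := H (ε / 2) (by positivity)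
  obtain ⟨v, hv, h3, h4⟩ := hW (ε / 2) (by positivity)
  refine ⟨v, hv, fun x => ?_, fun x => ?_⟩
  · linarith [norm_sub_le_norm_sub_add_norm_sub (u x) (u' x) (v x), h1 x, h3 x]
  · linarith [norm_sub_le_norm_sub_add_norm_sub (f x) (f' x) (lap v x), h2 x, h4 x]

/-- The gradient estimate survives the uniform limit: it makes the gradients of the approximations
uniformly Cauchy, so `u` is differentiable. -/
theorem IsLapLimit.gradient {u f : Ed d → ℂ} (H : IsLapLimit u f) {M : ℝ} (hM : 0 < M)
    (hu : ∀ x, ‖u x‖ ≤ M) (hf : ∀ x, ‖f x‖ ≤ M) :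
    Differentiable ℝ u ∧ ∀ i x, ‖pd u i x‖ ≤ (d + 1) * M := by
  have hε : ∀ n : ℕ, (0 : ℝ) < 1 / ((n : ℝ) + 1) := fun n => by positivity
  choose v hv h1 h2 using fun n : ℕ => H _ (hε n)
  have hvd : ∀ n, Differentiable ℝ (v n) := fun n => (hv n).differentiable two_ne_zero
  have hlim : Tendsto (fun n : ℕ => 1 / ((n : ℝ) + 1)) atTop (𝓝 0) :=
    tendsto_one_div_add_atTop_nhds_zero_nat
  have hpd : ∀ N n m, N ≤ n → N ≤ m → ∀ i x,
      ‖pd (v n) i x - pd (v m) i x‖ ≤ (d + 1) * (2 * (1 / ((N : ℝ) + 1))) := by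
    intro N n m hn hm i x
    have hn' : 1 / ((n : ℝ) + 1) ≤ 1 / ((N : ℝ) + 1) := Nat.one_div_le_one_div hn
    have hm' : 1 / ((m : ℝ) + 1) ≤ 1 / ((N : ℝ) + 1) := Nat.one_div_le_one_div hm
    have := norm_pd_le (M := 2 * (1 / ((N : ℝ) + 1))) (by positivity)
      ((hv n).sub (hv m))
      (fun y => by
        have e1 := h1 n y
        rw [norm_sub_rev] at e1
        linarith [norm_sub_le_norm_sub_add_norm_sub (v n y) (u y) (v m y), h1 m y])
      (fun y => by
        rw [lap_sub (hv n) (hv m)]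
        have e1 := h2 n y
        rw [norm_sub_rev] at e1
        linarith [norm_sub_le_norm_sub_add_norm_sub (lap (v n) y) (f y) (lap (v m) y), h2 m y])
      x i
    rwa [pd_sub (hvd n) (hvd m)] at this
  have hfd : ∀ N n m, N ≤ n → N ≤ m → ∀ x,
      ‖fderiv ℝ (v n) x - fderiv ℝ (v m) x‖
        ≤ gradConst d * ((d + 1) * (2 * (1 / ((N : ℝ) + 1)))) := by
    intro N n m hn hm x
    rw [← fderiv_fun_sub (hvd n x) (hvd m x)]
    refine norm_fderiv_le fun i => ?_
    rw [pd_sub (hvd n) (hvd m)]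
    exact hpd N n m hn hm i x
  have hlim2 : Tendsto (fun N : ℕ => gradConst d * ((d + 1) * (2 * (1 / ((N : ℝ) + 1))))) atTop
      (𝓝 0) := by
    simpa using ((hlim.const_mul 2).const_mul ((d : ℝ) + 1)).const_mul (gradConst d)
  have hUC : UniformCauchySeqOn (fun n => fderiv ℝ (v n)) atTop Set.univ := by
    rw [Metric.uniformCauchySeqOn_iff]
    intro ε hε
    obtain ⟨N, hN⟩ := (hlim2.eventually (gt_mem_nhds hε)).exists
    refine ⟨N, fun m hm n hn x _ => ?_⟩
    rw [dist_eq_norm]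
    exact (hfd N m n hm hn x).trans_lt hN
  have hptw : ∀ x, ∃ L, Tendsto (fun n => fderiv ℝ (v n) x) atTop (𝓝 L) := fun x =>
    cauchySeq_tendsto_of_complete (hUC.cauchySeq (Set.mem_univ x))
  choose L hL using hptw
  have hTU : TendstoUniformly (fun n => fderiv ℝ (v n)) L atTop := by
    rw [← tendstoUniformlyOn_univ]
    exact hUC.tendstoUniformlyOn_of_tendsto fun x _ => hL x
  have hvu : ∀ x, Tendsto (fun n => v n x) atTop (𝓝 (u x)) := fun x => by
    rw [tendsto_iff_norm_sub_tendsto_zero]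
    refine squeeze_zero (fun n => norm_nonneg _) (fun n => ?_) hlim
    rw [norm_sub_rev]; exact h1 n x
  have hder : ∀ x, HasFDerivAt u (L x) x :=
    hasFDerivAt_of_tendstoUniformly hTU
      (fun n x => (hvd n x).hasFDerivAt) hvu
  refine ⟨fun x => (hder x).differentiableAt, fun i x => ?_⟩
  have hpl : Tendsto (fun n => pd (v n) i x) atTop (𝓝 (pd u i x)) := by
    have : pd u i x = L x (EuclideanSpace.single i 1) := by rw [pd, (hder x).fderiv]
    rw [this]
    exact ((ContinuousLinearMap.apply ℝ ℂ (EuclideanSpace.single i (1 : ℝ))).continuous.tendsto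
      (L x)).comp (hL x)
  have hlim3 : Tendsto (fun n : ℕ => ((d : ℝ) + 1) * (M + 1 / ((n : ℝ) + 1))) atTop
      (𝓝 ((d + 1) * M)) := by
    simpa using (hlim.const_add M).const_mul ((d : ℝ) + 1)
  refine le_of_tendsto_of_tendsto' hpl.norm hlim3 fun n => ?_
  refine norm_pd_le (by have := hε n; linarith) (hv n) (fun y => ?_) (fun y => ?_) x i
  · linarith [norm_le_norm_add_norm_sub (u y) (v n y), h1 n y, hu y]
  · linarith [norm_le_norm_add_norm_sub (f y) (lap (v n) y), h2 n y, hf y]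

/-- Uniform continuity of the gradient: apply the gradient estimate to `u (· + h) - u`. -/
theorem IsLapLimit.uniformContinuous_pd {u f : Ed d → ℂ} (H : IsLapLimit u f)
    (hud : Differentiable ℝ u) (hu : UniformContinuous u) (hf : UniformContinuous f) (i : Fin d) :
    UniformContinuous (pd u i) := by
  rw [Metric.uniformContinuous_iff]
  intro ε hε
  have hM : 0 < ε / (2 * ((d : ℝ) + 1)) := by positivity
  obtain ⟨δ₁, hδ₁, H1⟩ := Metric.uniformContinuous_iff.1 hu _ hM
  obtain ⟨δ₂, hδ₂, H2⟩ := Metric.uniformContinuous_iff.1 hf _ hM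
  refine ⟨min δ₁ δ₂, lt_min hδ₁ hδ₂, fun {a b} hab => ?_⟩
  have hd : ∀ x, dist (x + (a - b)) x = dist a b := fun x => by
    rw [dist_eq_norm, add_sub_cancel_left, dist_eq_norm]
  have := ((H.diffQuot 1 (a - b)).gradient hM
    (fun x => by
      rw [one_mul, ← dist_eq_norm]
      exact (H1 (by rw [hd]; exact hab.trans_le (min_le_left _ _))).le)
    (fun x => by
      rw [one_mul, ← dist_eq_norm]
      exact (H2 (by rw [hd]; exact hab.trans_le (min_le_right _ _))).le)).2 i b
  have hc : Differentiable ℝ fun x => u (x + (a - b)) :=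
    hud.comp (differentiable_id.add_const _)
  simp only [one_mul] at this
  rw [pd_sub hc hud, pd_comp_add] at this
  simp only [add_sub_cancel] at this
  rw [dist_eq_norm]
  refine this.trans_lt ?_
  have : ((d : ℝ) + 1) * (ε / (2 * (d + 1))) = ε / 2 := by field_simp
  linarith

/-- The equation `Δu = f` may be differentiated. -/
theorem IsLapLimit.pd {u f : Ed d → ℂ} (H : IsLapLimit u f) (hu : Differentiable ℝ u)
    (hf : Differentiable ℝ f) (i : Fin d) (huc : UniformContinuous (pd u i))
    (hfc : UniformContinuous (_root_.pd f i)) :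
    IsLapLimit (_root_.pd u i) (_root_.pd f i) := by
  refine IsLapLimit.closure fun ε hε => ?_
  obtain ⟨δ₁, hδ₁, H1⟩ := exists_diffQuot_close hu i huc hε
  obtain ⟨δ₂, hδ₂, H2⟩ := exists_diffQuot_close hf i hfc hε
  obtain ⟨h, hh, hhδ⟩ := exists_between (lt_min hδ₁ hδ₂)
  exact ⟨_, _, H.diffQuot (h : ℂ)⁻¹ (h • EuclideanSpace.single i (1 : ℝ)),
    H1 h hh (hhδ.trans_le (min_le_left _ _)), H2 h hh (hhδ.trans_le (min_le_right _ _))⟩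

/-! ### Bounded functions with bounded, uniformly continuous derivatives -/

/-- `BUC k K u`: `u` is `k` times differentiable, and its iterated partial derivatives of order at
most `k` are uniformly continuous and bounded by `K`. -/
def BUC : ℕ → ℝ → (Ed d → ℂ) → Prop
  | 0, K, u => (∀ x, ‖u x‖ ≤ K) ∧ UniformContinuous u
  | k + 1, K, u => ((∀ x, ‖u x‖ ≤ K) ∧ UniformContinuous u) ∧ Differentiable ℝ u ∧
      ∀ i, BUC k K (pd u i)

theorem BUC.zero {k : ℕ} {K : ℝ} {u : Ed d → ℂ} (h : BUC k K u) :
    (∀ x, ‖u x‖ ≤ K) ∧ UniformContinuous u := by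
  cases k with
  | zero => exact h
  | succ k => exact h.1

theorem BUC.mono {k : ℕ} {K L : ℝ} (hKL : K ≤ L) {u : Ed d → ℂ} (h : BUC k K u) : BUC k L u := by
  induction k generalizing u with
  | zero => exact ⟨fun x => (h.1 x).trans hKL, h.2⟩
  | succ k ih => exact ⟨⟨fun x => (h.1.1 x).trans hKL, h.1.2⟩, h.2.1, fun i => ih (h.2.2 i)⟩

theorem BUC.of_succ {k : ℕ} {K : ℝ} {u : Ed d → ℂ} (h : BUC (k + 1) K u) : BUC k K u := by
  induction k generalizing u with
  | zero => exact h.1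
  | succ k ih => exact ⟨h.1, h.2.1, fun i => ih (h.2.2 i)⟩

theorem BUC.add {k : ℕ} {K L : ℝ} {u v : Ed d → ℂ} (hu : BUC k K u) (hv : BUC k L v) :
    BUC k (K + L) fun x => u x + v x := by
  have h0 : (∀ x, ‖u x + v x‖ ≤ K + L) ∧ UniformContinuous fun x => u x + v x :=
    ⟨fun x => (norm_add_le _ _).trans (add_le_add (hu.zero.1 x) (hv.zero.1 x)),
      hu.zero.2.add hv.zero.2⟩
  induction k generalizing u v with
  | zero => exact h0
  | succ k ih =>
    refine ⟨h0, hu.2.1.add hv.2.1, fun i => ?_⟩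
    rw [pd_add hu.2.1 hv.2.1]
    have h1 := hu.2.2 i
    have h2 := hv.2.2 i
    exact ih h1 h2 ⟨fun x => (norm_add_le _ _).trans (add_le_add (h1.zero.1 x) (h2.zero.1 x)),
      h1.zero.2.add h2.zero.2⟩

theorem BUC.const_mul {k : ℕ} {K : ℝ} {u : Ed d → ℂ} (hu : BUC k K u) (a : ℂ) :
    BUC k (‖a‖ * K) fun x => a * u x := by
  induction k generalizing u with
  | zero =>
    exact ⟨fun x => by rw [norm_mul]; gcongr; exact hu.1 x, hu.2.const_smul a⟩
  | succ k ih =>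
    refine ⟨⟨fun x => by rw [norm_mul]; gcongr; exact hu.1.1 x, hu.1.2.const_smul a⟩,
      hu.2.1.const_mul a, fun i => ?_⟩
    rw [pd_const_mul hu.2.1]
    exact ih (hu.2.2 i)

theorem uniformContinuous_mul_of_bounded {K L : ℝ} {u v : Ed d → ℂ}
    (hu : (∀ x, ‖u x‖ ≤ K) ∧ UniformContinuous u) (hv : (∀ x, ‖v x‖ ≤ L) ∧ UniformContinuous v) :
    UniformContinuous fun x => u x * v x := by
  have hK : 0 ≤ K := (norm_nonneg _).trans (hu.1 0)
  have hL : 0 ≤ L := (norm_nonneg _).trans (hv.1 0)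
  rw [Metric.uniformContinuous_iff]
  intro ε hε
  obtain ⟨δ₁, hδ₁, H1⟩ := Metric.uniformContinuous_iff.1 hu.2 (ε / (2 * (L + 1))) (by positivity)
  obtain ⟨δ₂, hδ₂, H2⟩ := Metric.uniformContinuous_iff.1 hv.2 (ε / (2 * (K + 1))) (by positivity)
  refine ⟨min δ₁ δ₂, lt_min hδ₁ hδ₂, fun {a b} hab => ?_⟩
  have h1 := (H1 (hab.trans_le (min_le_left _ _))).le
  have h2 := H2 (hab.trans_le (min_le_right _ _))
  rw [dist_eq_norm] at h1 h2 ⊢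
  have e : u a * v a - u b * v b = (u a - u b) * v a + u b * (v a - v b) := by ring
  calc ‖u a * v a - u b * v b‖ ≤ ‖u a - u b‖ * ‖v a‖ + ‖u b‖ * ‖v a - v b‖ := by
        rw [e, ← norm_mul, ← norm_mul]; exact norm_add_le _ _
    _ ≤ ε / (2 * (L + 1)) * (L + 1) + (K + 1) * ‖v a - v b‖ := by
        gcongr
        · linarith [hv.1 a]
        · linarith [hu.1 b]
    _ < ε / (2 * (L + 1)) * (L + 1) + (K + 1) * (ε / (2 * (K + 1))) := by gcongr
    _ = ε := by field_simp; ring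

theorem BUC.mul {k : ℕ} {K L : ℝ} {u v : Ed d → ℂ} (hu : BUC k K u) (hv : BUC k L v) :
    BUC k (2 ^ k * (K * L)) fun x => u x * v x := by
  induction k generalizing u v K L with
  | zero =>
    refine ⟨fun x => ?_, uniformContinuous_mul_of_bounded hu hv⟩
    rw [norm_mul, pow_zero, one_mul]
    exact mul_le_mul (hu.1 x) (hv.1 x) (norm_nonneg _) ((norm_nonneg _).trans (hu.1 x))
  | succ k ih =>
    refine ⟨⟨fun x => ?_, uniformContinuous_mul_of_bounded hu.1 hv.1⟩, hu.2.1.mul hv.2.1,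
      fun i => ?_⟩
    · have h1 := mul_le_mul (hu.1.1 x) (hv.1.1 x) (norm_nonneg _)
        ((norm_nonneg _).trans (hu.1.1 x))
      have h2 : (1 : ℝ) ≤ 2 ^ (k + 1) := one_le_pow₀ (by norm_num)
      have h3 : 0 ≤ K * L := le_trans (by positivity) h1
      rw [norm_mul]
      exact h1.trans (le_mul_of_one_le_left h3 h2)
    · rw [pd_mul hu.2.1 hv.2.1]
      exact ((ih hu.of_succ (hv.2.2 i)).add (ih hv.of_succ (hu.2.2 i))).mono
        (le_of_eq (by ring))

theorem BUC.conj {k : ℕ} {K : ℝ} {u : Ed d → ℂ} (hu : BUC k K u) :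
    BUC k K fun x => (starRingEnd ℂ) (u x) := by
  induction k generalizing u with
  | zero => exact ⟨fun x => by simpa using hu.1 x,
      Complex.conjCLE.toContinuousLinearMap.uniformContinuous.comp hu.2⟩
  | succ k ih =>
    refine ⟨⟨fun x => by simpa using hu.1.1 x,
      Complex.conjCLE.toContinuousLinearMap.uniformContinuous.comp hu.1.2⟩,
      Complex.conjCLE.toContinuousLinearMap.differentiable.comp hu.2.1, fun i => ?_⟩
    rw [pd_conj hu.2.1]
    exact ih (hu.2.2 i)

theorem BUC.contDiff {k : ℕ} {K : ℝ} {u : Ed d → ℂ} (hu : BUC k K u) : ContDiff ℝ k u := by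
  induction k generalizing u with
  | zero => exact contDiff_zero.2 hu.2.continuous
  | succ k ih =>
    push_cast
    rw [contDiff_succ_iff_fderiv]
    refine ⟨hu.2.1, by simp, ?_⟩
    rw [fderiv_eq_sum]
    exact ContDiff.sum fun i _ => (ContinuousLinearMap.contDiff _).comp (ih (hu.2.2 i))

theorem BUC.norm_iteratedFDeriv_le {k : ℕ} {K : ℝ} {u : Ed d → ℂ} (hu : BUC k K u) (x : Ed d) :
    ‖iteratedFDeriv ℝ k u x‖ ≤ gradConst d ^ k * K := by
  induction k generalizing u with
  | zero => simpa using hu.1 x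
  | succ k ih =>
    have hc : ∀ i, ContDiff ℝ k (pd u i) := fun i => (hu.2.2 i).contDiff
    rw [← norm_iteratedFDeriv_fderiv, fderiv_eq_sum]
    have e := iteratedFDeriv_sum (𝕜 := ℝ) (i := k) (u := (Finset.univ : Finset (Fin d)))
      (f := fun i x => ContinuousLinearMap.smulRightL ℝ (Ed d) ℂ (EuclideanSpace.proj i) (pd u i x))
      (fun i _ => (ContinuousLinearMap.contDiff _).comp (hc i))
    rw [e, Finset.sum_apply]
    calc _ ≤ ∑ i : Fin d, ‖ContinuousLinearMap.smulRightL ℝ (Ed d) ℂ (EuclideanSpace.proj i)‖ *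
            (gradConst d ^ k * K) := by
          refine (norm_sum_le _ _).trans (Finset.sum_le_sum fun i _ => ?_)
          refine (ContinuousLinearMap.norm_iteratedFDeriv_comp_left
            (ContinuousLinearMap.smulRightL ℝ (Ed d) ℂ (EuclideanSpace.proj i))
            (hc i).contDiffAt le_rfl).trans ?_
          gcongr
          exact ih (hu.2.2 i)
      _ = gradConst d ^ (k + 1) * K := by
          rw [← Finset.sum_mul, ← gradConst]; ring

/-! ### Regularity for the Laplacian -/

/-- Each `BUC` order of `f` gives one more for `u`. The induction differentiates the equation, which
is legitimate because `IsLapLimit` passes to difference quotients and to uniform limits. -/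
theorem IsLapLimit.regularity {k : ℕ} {M : ℝ} (hM : 0 < M) {u f : Ed d → ℂ} (H : IsLapLimit u f)
    (hu : ∀ x, ‖u x‖ ≤ M) (hf : BUC k M f) : BUC (k + 1) (((d : ℝ) + 1) ^ (k + 1) * M) u := by
  have hd1 : (1 : ℝ) ≤ (d : ℝ) + 1 := by simp
  induction k generalizing u f M with
  | zero =>
    obtain ⟨hud, hup⟩ := H.gradient hM hu hf.1
    have huc := uniformContinuous_of_pd hud hup
    refine ⟨⟨fun x => (hu x).trans ?_, huc⟩, hud, fun i => ⟨fun x => ?_, ?_⟩⟩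
    · exact le_mul_of_one_le_left hM.le (one_le_pow₀ hd1)
    · simpa using hup i x
    · exact H.uniformContinuous_pd hud huc hf.2 i
  | succ k ih =>
    obtain ⟨hud, hup⟩ := H.gradient hM hu hf.zero.1
    have huc := uniformContinuous_of_pd hud hup
    refine ⟨⟨fun x => (hu x).trans ?_, huc⟩, hud, fun i => ?_⟩
    · exact le_mul_of_one_le_left hM.le (one_le_pow₀ hd1)
    · have hW := H.pd hud hf.2.1 i (H.uniformContinuous_pd hud huc hf.zero.2 i) (hf.2.2 i).zero.2
      refine (ih (M := (d + 1) * M) (by positivity) hW (hup i)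
        ((hf.2.2 i).mono (le_mul_of_one_le_left hM.le hd1))).mono (le_of_eq (by ring))

/-- Bootstrap: if `φ` is `BUC` of order `k`, so is the cubic right-hand side `Δφ`, hence `φ` is `BUC`
of order `k + 1`. The bound `K` does not depend on `φ`. -/
theorem exists_BUC_bound (d : ℕ) {A : ℝ} (hA : 0 ≤ A) (k : ℕ) :
    ∃ K : ℝ, 0 < K ∧ ∀ φ : Ed d → ℂ, ContDiff ℝ 2 φ →
      (∀ x, lap φ x = -(((A : ℂ) - (‖φ x‖ : ℂ) ^ 2) * φ x)) → BUC k K φ := by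
  have hbound : ∀ φ : Ed d → ℂ, ContDiff ℝ 2 φ →
      (∀ x, lap φ x = -(((A : ℂ) - (‖φ x‖ : ℂ) ^ 2) * φ x)) → ∀ x, ‖φ x‖ ≤ √A :=
    fun φ hφ heq x => Real.le_sqrt_of_sq_le (norm_sq_le hA hφ heq x)
  induction k with
  | zero =>
    refine ⟨√A + A * √A + 1, by positivity, fun φ hφ heq => ⟨fun x => ?_, ?_⟩⟩
    · have : 0 ≤ A * √A := by positivity
      linarith [hbound φ hφ heq x]
    · have hg := (IsLapLimit.of_contDiff hφ).gradient (M := √A + A * √A + 1) (by positivity)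
        (fun x => by
          have : 0 ≤ A * √A := by positivity
          linarith [hbound φ hφ heq x])
        (fun x => by
          have h1 := norm_sq_le hA hφ heq x
          have h2 : ‖(A : ℂ) - (‖φ x‖ : ℂ) ^ 2‖ ≤ A := by
            rw [← Complex.ofReal_pow, ← Complex.ofReal_sub, Complex.norm_real, Real.norm_eq_abs,
              abs_le]
            constructor <;> nlinarith [sq_nonneg ‖φ x‖]
          have h3 := mul_le_mul h2 (hbound φ hφ heq x) (norm_nonneg _) hA
          rw [heq, norm_neg, norm_mul]
          linarith [Real.sqrt_nonneg A])
      exact uniformContinuous_of_pd hg.1 hg.2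
  | succ k ih =>
    obtain ⟨K, hK, H⟩ := ih
    set K' : ℝ := ‖(-A : ℂ)‖ * K + 2 ^ k * (2 ^ k * (K * K) * K) with hK'
    refine ⟨((d : ℝ) + 1) ^ (k + 1) * (K' + √A + 1), by positivity, fun φ hφ heq => ?_⟩
    have hB := H φ hφ heq
    have hF : BUC k K' (lap φ) := by
      have e : lap φ = fun x => (-A : ℂ) * φ x + φ x * (starRingEnd ℂ) (φ x) * φ x := by
        ext x
        rw [heq, Complex.mul_conj, Complex.normSq_eq_norm_sq]
        push_cast
        ring
      rw [e]
      exact (hB.const_mul _).add ((hB.mul hB.conj).mul hB)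
    have hK0 : 0 ≤ K' := by positivity
    exact (IsLapLimit.of_contDiff hφ).regularity (by positivity)
      (fun x => by linarith [hbound φ hφ heq x]) (hF.mono (by linarith [Real.sqrt_nonneg A]))

/-! ### The gauge transformation -/

/-- The phase factor `e^{i a x₁}`. -/
def phase [NeZero d] (a : ℝ) (x : Ed d) : ℂ := Complex.exp ((a * x 0 : ℝ) * Complex.I)

section gauge
variable [NeZero d]

theorem norm_phase (a : ℝ) (x : Ed d) : ‖phase a x‖ = 1 := Complex.norm_exp_ofReal_mul_I _

theorem contDiff_phase (a : ℝ) {n : WithTop ℕ∞} : ContDiff ℝ n (phase a : Ed d → ℂ) := by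
  have h0 : ContDiff ℝ n fun x : Ed d => a * x 0 := by fun_prop
  exact ((Complex.ofRealCLM.contDiff.comp h0).mul contDiff_const).cexp

theorem differentiable_phase (a : ℝ) : Differentiable ℝ (phase a : Ed d → ℂ) :=
  (contDiff_phase a (n := 1)).differentiable one_ne_zero

theorem pd_phase (a : ℝ) (i : Fin d) :
    pd (phase a) i = fun x : Ed d => (if i = 0 then a * Complex.I else 0) * phase a x := by
  ext x
  have h1 := line_hasDerivAt_one (differentiable_phase a) x i 0
  rw [zero_smul, add_zero] at h1
  have h2 : HasDerivAt (fun t : ℝ => phase a (x + t • (EuclideanSpace.single i (1 : ℝ) : Ed d)))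
      ((if i = 0 then a * Complex.I else 0) * phase a x) 0 := by
    have hr : HasDerivAt (fun t : ℝ => a * (x + t • (EuclideanSpace.single i (1 : ℝ) : Ed d)) 0)
        (if i = 0 then a else 0) 0 := by
      have h3 : HasDerivAt (fun t : ℝ => x 0 + t * (if i = 0 then 1 else 0))
          (if i = 0 then 1 else 0) 0 := by
        simpa using ((hasDerivAt_id (0 : ℝ)).mul_const (if i = 0 then (1 : ℝ) else 0)).const_add (x 0)
      have e : (fun t : ℝ => a * (x + t • (EuclideanSpace.single i (1 : ℝ) : Ed d)) 0)
          = fun t : ℝ => a * (x 0 + t * (if i = 0 then 1 else 0)) := by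
        ext t
        simp [Pi.single_apply, eq_comm]
      rw [e]
      exact (h3.const_mul a).congr_deriv (by split_ifs <;> simp)
    have h5 := (hr.ofReal_comp.mul_const Complex.I).cexp
    refine h5.congr_deriv ?_
    simp only [zero_smul, add_zero, phase]
    split_ifs <;> simp [mul_comm]
  exact h1.unique h2

theorem lap_phase_mul (a : ℝ) {u : Ed d → ℂ} (hu : ContDiff ℝ 2 u) (x : Ed d) :
    lap (fun x => phase a x * u x) x
      = phase a x * (lap u x + 2 * (a * Complex.I) * pd u 0 x - a ^ 2 * u x) := by
  set κ : Fin d → ℂ := fun i => if i = 0 then a * Complex.I else 0 with hκ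
  have h1 : ∀ (i : Fin d) (v : Ed d → ℂ), Differentiable ℝ v →
      pd (fun x => phase a x * v x) i = fun x => phase a x * (pd v i x + κ i * v x) := by
    intro i v hv
    rw [pd_mul (differentiable_phase a) hv, pd_phase]
    ext x
    simp only [hκ]
    ring
  have hud : Differentiable ℝ u := hu.differentiable two_ne_zero
  have h2 : ∀ i, pd (pd (fun x => phase a x * u x) i) i x
      = phase a x * (pd (pd u i) i x + 2 * κ i * pd u i x + κ i ^ 2 * u x) := by
    intro i
    rw [h1 i u hud, h1 i _ ((differentiable_pd hu i).fun_add (hud.const_mul (κ i))),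
      pd_add (differentiable_pd hu i) (hud.const_mul (κ i)), pd_const_mul hud]
    ring
  simp only [lap_eq_sum, h2, ← Finset.mul_sum, Finset.sum_add_distrib]
  have h3 : ∑ i, 2 * κ i * pd u i x = 2 * (a * Complex.I) * pd u 0 x := by
    rw [Finset.sum_eq_single 0] <;> simp +contextual [hκ]
  have h4 : ∑ i, κ i ^ 2 * u x = -(a ^ 2 * u x) := by
    rw [Finset.sum_eq_single 0]
    · simp [hκ, mul_pow]
    · simp +contextual [hκ]
    · simp
  rw [h3, h4]
  ring

theorem exists_BUC_phase (a : ℝ) (k : ℕ) : ∃ K : ℝ, 0 < K ∧ BUC k K (phase a : Ed d → ℂ) := by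
  have hpd : ∀ i, ‖(if i = (0 : Fin d) then (a : ℂ) * Complex.I else 0)‖ ≤ |a| := by
    intro i; split_ifs <;> simp
  have huc : UniformContinuous (phase a : Ed d → ℂ) :=
    uniformContinuous_of_pd (differentiable_phase a) (B := |a|) fun i x => by
      rw [pd_phase, norm_mul, norm_phase, mul_one]; exact hpd i
  induction k with
  | zero => exact ⟨1, one_pos, fun x => (norm_phase a x).le, huc⟩
  | succ k ih =>
    obtain ⟨K, hK, H⟩ := ih
    refine ⟨1 + |a| * K, by positivity, ⟨fun x => ?_, huc⟩, differentiable_phase a, fun i => ?_⟩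
    · rw [norm_phase]
      have : 0 ≤ |a| * K := by positivity
      linarith
    · rw [pd_phase]
      refine (H.const_mul _).mono ?_
      have := mul_le_mul_of_nonneg_right (hpd i) hK.le
      linarith

/-- Multiplying by `e^{icx₁/2}` removes the first-order term and replaces the constant `1` by
`1 + c²/4`. -/
theorem gauge_eq {c : ℝ} {ψ : Ed d → ℂ} (hψ : ContDiff ℝ 2 ψ) (h : GPeq c ψ) (x : Ed d) :
    lap (fun x => phase (c / 2) x * ψ x) x = -((((1 + c ^ 2 / 4 : ℝ) : ℂ)
      - (‖phase (c / 2) x * ψ x‖ : ℂ) ^ 2) * (phase (c / 2) x * ψ x)) := by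
  have e : lap ψ x = -(Complex.I * (c : ℂ) * pd ψ 0 x) - (1 - (‖ψ x‖ : ℂ) ^ 2) * ψ x := by
    linear_combination h x
  rw [lap_phase_mul _ hψ, norm_mul, norm_phase, e]
  push_cast
  ring

theorem phase_neg_mul (a : ℝ) (ψ : Ed d → ℂ) :
    ψ = fun x => phase (-a) x * (phase a x * ψ x) := by
  ext x
  rw [← mul_assoc, phase, phase, ← Complex.exp_add]
  simp

end gauge

end helpers

/-- regularity, the a priori `L^∞` bound `|ψ| ≤ √(1 + c²/4)`, and uniform
bounds on all derivatives of solutions, with constants depending only on `d`, `k`, `c`. -/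
theorem statement4 (d : ℕ) [NeZero d] (hd : d = 2 ∨ d = 3) (c : ℝ) :
    (∀ ψ : Ed d → ℂ, ContDiff ℝ 2 ψ → GPeq c ψ →
      ContDiff ℝ (⊤ : ℕ∞) ψ ∧ ∀ x, ‖ψ x‖ ≤ Real.sqrt (1 + c ^ 2 / 4)) ∧
    (∀ k : ℕ, ∃ C > (0 : ℝ), ∀ ψ : Ed d → ℂ, ContDiff ℝ 2 ψ → GPeq c ψ →
      ∀ x, ‖iteratedFDeriv ℝ k ψ x‖ ≤ C) := by
  have hA : (0 : ℝ) ≤ 1 + c ^ 2 / 4 := by positivity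
  have key : ∀ k : ℕ, ∃ K : ℝ, 0 < K ∧ ∀ ψ : Ed d → ℂ, ContDiff ℝ 2 ψ → GPeq c ψ → BUC k K ψ := by
    intro k
    obtain ⟨K, hK, H⟩ := exists_BUC_bound d hA k
    obtain ⟨L, hL, HL⟩ := exists_BUC_phase (d := d) (-(c / 2)) k
    refine ⟨2 ^ k * (L * K), by positivity, fun ψ hψ h => ?_⟩
    rw [phase_neg_mul (c / 2) ψ]
    exact HL.mul (H _ ((contDiff_phase _).mul hψ) (gauge_eq hψ h))
  refine ⟨fun ψ hψ h => ⟨?_, fun x => ?_⟩, fun k => ?_⟩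
  · rw [contDiff_infty]
    intro k
    obtain ⟨K, -, H⟩ := key k
    exact (H ψ hψ h).contDiff
  · have := norm_sq_le hA ((contDiff_phase (c / 2)).mul hψ) (gauge_eq hψ h) x
    rw [norm_mul, norm_phase, one_mul] at this
    exact Real.le_sqrt_of_sq_le this
  · obtain ⟨K, hK, H⟩ := key k
    refine ⟨gradConst d ^ k * K + 1, ?_, fun ψ hψ h x => ?_⟩
    · have := gradConst_nonneg d
      positivity
    · linarith [(H ψ hψ h).norm_iteratedFDeriv_le x]
end
end

section
/- Let d ∈ {2,3}, c ∈ ℝ, and let ψ be a finite energy solution of the Gross–Pitaevskii traveling wave equation with speed c on ℝ^d, normalized so that ψ(x) → 1 as |x| → ∞ and such that the function ∂_{x₁}(Im ψ)(Re ψ − 1) is integrable on ℝ^d. Then ((d−2)/2) ∫_{ℝ^d} |∇ψ|² − (d−1) c P(ψ) + (d/4) ∫_{ℝ^d} (1 − |ψ|²)² = 0. -/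
/-!
Write `ψ = u + iv` and `η = 1 - |ψ|²`. The traveling wave equation, multiplied by `∂_jψ`, says that
the stress tensor
`T_ij = ∂_iψ · ∂_jψ - δ_ij (|∇ψ|² / 2 + η² / 4) + c (δ_{i0} β ∂_jv - δ_ij β ∂₀v)`
is divergence free in `i` (`div_stress`). Here `β = u - 1` gives the usual momentum density, but
`β` may be changed by any function of `v`. An integrable divergence-free field has zero mean
(`integral_eq_zero_of_div_eq_zero`), so `∫ T_jj = 0` for every `j` as soon as `T` is integrable, and
summing over `j` gives the Pohozaev identity with momentum density `-β ∂₀v`.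

The difficulty is integrability: only `(u - 1) ∂₀v` is assumed integrable, and `(u - 1) ∂_jv` with
`j ≠ 0` need not be controlled by the energy. This is cured by `β = u - 1 - g(v)`, where `1 + g(v)`
is the real part of the point of the unit circle with imaginary part `v`. Since `ψ → 1`, near
infinity `|β| ≤ 2 |η|`, so every `β ∂_jv` is integrable because `η` and `∂_jv` are square
integrable. The change does not affect the momentum: `g(v) ∂₀v` is the `∂₀`-derivative of a function
of `v` that tends to zero at infinity, and it is integrable, so its integral vanishes by the
fundamental theorem of calculus on lines (`integral_partial_eq_zero`).
-/

open MeasureTheory Filter Complex Metric Topology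

noncomputable section

/-! ### Two integral identities on `ℝ^d` -/

/-- A function tending to zero at infinity has a partial derivative of zero mean as soon as that
derivative is integrable; the function itself need not be integrable. Apply the fundamental theorem
of calculus on almost every line parallel to the `i`-th axis, and Fubini. -/
theorem integral_partial_eq_zero {d : ℕ} (f : Ed d → ℝ) (hf : ContDiff ℝ 1 f)
    (hlim : Tendsto f (cocompact (Ed d)) (𝓝 0)) (i : Fin d)
    (hint : Integrable fun x => fderiv ℝ f x (EuclideanSpace.single i 1)) :
    ∫ x, fderiv ℝ f x (EuclideanSpace.single i 1) = 0 := by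
  obtain ⟨n, rfl⟩ : ∃ n, d = n + 1 := ⟨d - 1, by have := i.pos; omega⟩
  have hmp := (PiLp.volume_preserving_toLp (Fin (n + 1))).comp
    (volume_preserving_piFinSuccAbove (fun _ : Fin (n + 1) => ℝ) i).symm
  have hemb : MeasurableEmbedding
      ((WithLp.toLp 2 : (Fin (n + 1) → ℝ) → Ed (n + 1)) ∘
        (MeasurableEquiv.piFinSuccAbove (fun _ : Fin (n + 1) => ℝ) i).symm) :=
    (MeasurableEquiv.toLp 2 (Fin (n + 1) → ℝ)).measurableEmbedding.comp
      (MeasurableEquiv.measurableEmbedding _)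
  rw [← hmp.integral_comp hemb]
  have hint' := (hmp.integrable_comp_emb hemb).2 hint
  rw [Measure.volume_eq_prod] at hint' ⊢
  refine (integral_prod_symm _ hint').trans ?_
  refine integral_eq_zero_of_ae ?_
  filter_upwards [hint'.prod_left_ae] with y hy
  set L : ℝ → Ed (n + 1) := fun s => WithLp.toLp 2 (i.insertNth s y) with hL
  have hLd : ∀ s, HasDerivAt L (EuclideanSpace.single i 1) s := by
    intro s
    have h1 : L = fun s => L 0 + s • (EuclideanSpace.single i (1 : ℝ) : Ed (n + 1)) := by
      funext s
      ext j
      refine Fin.succAboveCases i ?_ (fun j => ?_) j <;> simp [hL]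
    rw [h1]
    simpa using ((hasDerivAt_id s).smul_const
      (EuclideanSpace.single i (1 : ℝ) : Ed (n + 1))).const_add (L 0)
  have hnorm : ∀ s, ‖s‖ ≤ ‖L s‖ := by
    intro s
    have := PiLp.norm_apply_le (L s) i
    simpa [hL] using this
  have hco : Tendsto L (cocompact ℝ) (cocompact (Ed (n + 1))) := by
    rw [← Metric.cobounded_eq_cocompact, ← Metric.cobounded_eq_cocompact,
      ← tendsto_norm_atTop_iff_cobounded]
    exact tendsto_atTop_mono hnorm tendsto_norm_cobounded_atTop
  have hd : ∀ s, HasDerivAt (f ∘ L) (fderiv ℝ f (L s) (EuclideanSpace.single i 1)) s := fun s =>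
    ((hf.differentiable one_ne_zero (L s)).hasFDerivAt).comp_hasDerivAt s (hLd s)
  have := integral_of_hasDerivAt_of_tendsto hd hy
    ((hlim.comp hco).mono_left (by rw [cocompact_eq_atBot_atTop]; exact le_sup_left))
    ((hlim.comp hco).mono_left (by rw [cocompact_eq_atBot_atTop]; exact le_sup_right))
  rw [sub_zero] at this
  exact this

/-- An integrable divergence-free field has zero mean: test `div V = 0` against the compactly
supported functions `x ↦ r φ(x / r)`, where `φ(x) = x_k` near the origin. Their gradients are
bounded uniformly in `r` and converge pointwise to the `k`-th basis vector. -/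
theorem integral_eq_zero_of_div_eq_zero {d : ℕ} (V : Fin d → Ed d → ℝ)
    (hV : ∀ i, ContDiff ℝ 1 (V i)) (hI : ∀ i, Integrable (V i))
    (hdiv : ∀ x, ∑ i, fderiv ℝ (V i) x (EuclideanSpace.single i 1) = 0) (k : Fin d) :
    ∫ x, V k x = 0 := by
  let χ : ContDiffBump (0 : Ed d) := ⟨1, 2, one_pos, one_lt_two⟩
  set φ : Ed d → ℝ := fun x => x k * χ x with hφ
  have hφd : ContDiff ℝ 1 φ := by
    have h1 : ContDiff ℝ 1 (fun x : Ed d => x k) := by fun_prop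
    exact h1.mul χ.contDiff
  have hφs : HasCompactSupport φ := χ.hasCompactSupport.mul_left
  have hφ' : Continuous (fderiv ℝ φ) := hφd.continuous_fderiv one_ne_zero
  obtain ⟨C, hC⟩ := (hφs.fderiv (𝕜 := ℝ)).exists_bound_of_continuous hφ'
  have hφ0 : ∀ i, fderiv ℝ φ 0 (EuclideanSpace.single i 1) = if i = k then 1 else 0 := by
    intro i
    have h1 : φ =ᶠ[𝓝 0] fun x => EuclideanSpace.proj (𝕜 := ℝ) k x := by
      filter_upwards [χ.eventuallyEq_one] with x hx
      simp [hφ, hx]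
    rw [h1.fderiv_eq, ContinuousLinearMap.fderiv]
    simp [eq_comm]
  have hVc : ∀ i, Continuous (fun x => fderiv ℝ (V i) x (EuclideanSpace.single i 1)) := fun i =>
    ((hV i).continuous_fderiv one_ne_zero).clm_apply continuous_const
  have hzero : ∀ n : ℕ, ∫ x, ∑ i, fderiv ℝ φ ((n + 1 : ℝ)⁻¹ • x) (EuclideanSpace.single i 1) * V i x
      = 0 := by
    intro n
    set r : ℝ := n + 1 with hr
    have hr0 : r ≠ 0 := by positivity
    set Φ : Ed d → ℝ := fun x => r * φ (r⁻¹ • x) with hΦ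
    have hΦd : ContDiff ℝ 1 Φ := contDiff_const.mul (hφd.comp (contDiff_const_smul _))
    have hΦs : HasCompactSupport Φ := (hφs.comp_smul (inv_ne_zero hr0)).mul_left
    have hΦ' : ∀ x, fderiv ℝ Φ x = fderiv ℝ φ (r⁻¹ • x) := by
      intro x
      have h1 : HasFDerivAt Φ _ x := (((hφd.differentiable one_ne_zero (r⁻¹ • x)).hasFDerivAt).comp x
        ((hasFDerivAt_id x).const_smul r⁻¹)).const_mul r
      rw [h1.fderiv]
      ext y
      simp [hr0]
    have hΦc' : ∀ i, Continuous (fun x => fderiv ℝ Φ x (EuclideanSpace.single i 1)) := fun i =>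
      (hΦd.continuous_fderiv one_ne_zero).clm_apply continuous_const
    have hi1 : ∀ i, Integrable (fun x => fderiv ℝ Φ x (EuclideanSpace.single i 1) * V i x) :=
      fun i => ((hΦc' i).mul (hV i).continuous).integrable_of_hasCompactSupport
        ((hΦs.fderiv_apply (𝕜 := ℝ) _).mul_right)
    have hi2 : ∀ i, Integrable (fun x => Φ x * fderiv ℝ (V i) x (EuclideanSpace.single i 1)) :=
      fun i => (hΦd.continuous.mul (hVc i)).integrable_of_hasCompactSupport hΦs.mul_right
    have hi3 : ∀ i, Integrable (fun x => Φ x * V i x) :=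
      fun i => (hΦd.continuous.mul (hV i).continuous).integrable_of_hasCompactSupport hΦs.mul_right
    have hbp : ∀ i, ∫ x, fderiv ℝ Φ x (EuclideanSpace.single i 1) * V i x =
        -∫ x, Φ x * fderiv ℝ (V i) x (EuclideanSpace.single i 1) := fun i => by
      rw [integral_mul_fderiv_eq_neg_fderiv_mul_of_integrable (hi1 i) (hi2 i) (hi3 i)
        (fun x _ => hΦd.differentiable one_ne_zero x)
        (fun x _ => (hV i).differentiable one_ne_zero x), neg_neg]
    simp_rw [← hΦ']
    rw [integral_finsetSum _ (fun i _ => hi1 i), Finset.sum_congr rfl (fun i _ => hbp i),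
      Finset.sum_neg_distrib, ← integral_finsetSum _ (fun i _ => hi2 i)]
    simp [← Finset.mul_sum, hdiv]
  have hlim : Tendsto (fun n : ℕ => ∫ x, ∑ i,
      fderiv ℝ φ ((n + 1 : ℝ)⁻¹ • x) (EuclideanSpace.single i 1) * V i x) atTop
      (𝓝 (∫ x, V k x)) := by
    refine tendsto_integral_of_dominated_convergence (fun x => ∑ i, C * |V i x|) ?_ ?_ ?_ ?_
    · intro n
      refine Continuous.aestronglyMeasurable (continuous_finsetSum _ fun i _ => ?_)
      exact ((hφ'.comp (continuous_const_smul _)).clm_apply continuous_const).mul (hV i).continuous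
    · exact integrable_finsetSum _ fun i _ => (hI i).abs.const_mul C
    · refine fun n => Eventually.of_forall fun x => ?_
      refine (norm_sum_le _ _).trans (Finset.sum_le_sum fun i _ => ?_)
      rw [norm_mul, Real.norm_eq_abs (V i x)]
      gcongr
      refine (ContinuousLinearMap.le_opNorm _ _).trans ?_
      simpa using hC _
    · refine Eventually.of_forall fun x => ?_
      have h0 : Tendsto (fun n : ℕ => (n + 1 : ℝ)⁻¹ • x) atTop (𝓝 0) := by
        have := (tendsto_one_div_add_atTop_nhds_zero_nat (𝕜 := ℝ)).smul_const x
        simpa using this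
      have h1 : Tendsto (fun n : ℕ => ∑ i,
          fderiv ℝ φ ((n + 1 : ℝ)⁻¹ • x) (EuclideanSpace.single i 1) * V i x) atTop
          (𝓝 (∑ i, fderiv ℝ φ 0 (EuclideanSpace.single i 1) * V i x)) :=
        tendsto_finsetSum _ fun i _ =>
          (((hφ'.clm_apply continuous_const).tendsto 0).comp h0).mul_const _
      simpa [hφ0] using h1
  simp only [hzero] at hlim
  exact (tendsto_nhds_unique hlim tendsto_const_nhds)

/-! ### Partial derivatives of real functions -/

/-- The `i`-th partial derivative of a real function (the counterpart of `pd` for real values). -/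
def D {d : ℕ} (f : Ed d → ℝ) (i : Fin d) (x : Ed d) : ℝ :=
  fderiv ℝ f x (EuclideanSpace.single i 1)

section Calculus
variable {d : ℕ} {f g : Ed d → ℝ} {x : Ed d} {i : Fin d}

theorem D_contDiff (hf : ContDiff ℝ 2 f) (i : Fin d) : ContDiff ℝ 1 (D f i) :=
  (hf.fderiv_right (m := 1) (by norm_num)).clm_apply contDiff_const

theorem D_continuous (hf : ContDiff ℝ 1 f) (i : Fin d) : Continuous (D f i) :=
  (hf.continuous_fderiv one_ne_zero).clm_apply continuous_const

theorem D_symm (hf : ContDiff ℝ 2 f) (i j : Fin d) (x : Ed d) : D (D f i) j x = D (D f j) i x := by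
  have h : ∀ i j : Fin d, D (D f i) j x =
      fderiv ℝ (fderiv ℝ f) x (EuclideanSpace.single j 1) (EuclideanSpace.single i 1) := by
    intro i j
    have hd : DifferentiableAt ℝ (fderiv ℝ f) x :=
      (hf.fderiv_right (m := 1) (by norm_num)).differentiable one_ne_zero x
    change fderiv ℝ (fun y => fderiv ℝ f y (EuclideanSpace.single i 1)) x _ = _
    rw [fderiv_clm_apply hd (differentiableAt_const _)]
    simp
  rw [h, h]
  exact (hf.contDiffAt.isSymmSndFDerivAt (by simp)) _ _

theorem D_add (hf : DifferentiableAt ℝ f x) (hg : DifferentiableAt ℝ g x) :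
    D (fun y => f y + g y) i x = D f i x + D g i x := by
  simp [D, fderiv_fun_add hf hg]

theorem D_sub (hf : DifferentiableAt ℝ f x) (hg : DifferentiableAt ℝ g x) :
    D (fun y => f y - g y) i x = D f i x - D g i x := by
  simp [D, fderiv_fun_sub hf hg]

theorem D_mul (hf : DifferentiableAt ℝ f x) (hg : DifferentiableAt ℝ g x) :
    D (fun y => f y * g y) i x = D f i x * g x + f x * D g i x := by
  simp [D, fderiv_fun_mul hf hg]; ring

theorem D_const_mul (r : ℝ) (hf : DifferentiableAt ℝ f x) :
    D (fun y => r * f y) i x = r * D f i x := by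
  simp [D, fderiv_const_mul hf]

theorem D_const (r : ℝ) : D (fun _ : Ed d => r) i x = 0 := by
  simp [D]

theorem D_sq (hf : DifferentiableAt ℝ f x) : D (fun y => f y ^ 2) i x = 2 * f x * D f i x := by
  simp only [pow_two]; rw [D_mul hf hf]; ring

theorem D_sum {F : Fin d → Ed d → ℝ} (hF : ∀ k, DifferentiableAt ℝ (F k) x) :
    D (fun y => ∑ k, F k y) i x = ∑ k, D (F k) i x := by
  simp [D, fderiv_fun_sum fun k _ => hF k]

theorem D_comp {G : ℝ → ℝ} {G' : ℝ} (hG : HasDerivAt G G' (f x)) (hf : DifferentiableAt ℝ f x) :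
    D (fun y => G (f y)) i x = G' * D f i x := by
  have h := hG.comp_hasFDerivAt x hf.hasFDerivAt
  have h' : fderiv ℝ (fun y => G (f y)) x = G' • fderiv ℝ f x := h.fderiv
  simp [D, h']

theorem D_ite (p : Prop) [Decidable p] : D (fun y => if p then f y else 0) i x =
    if p then D f i x else 0 := by
  split_ifs
  · rfl
  · exact D_const 0

end Calculus

/-! ### The stress tensor and its conservation law -/

/-- The energy density in terms of the real part `u` and the imaginary part `v` of `ψ`. -/
def eD {d : ℕ} (u v : Ed d → ℝ) (x : Ed d) : ℝ :=
  1 / 2 * ∑ k, (D u k x ^ 2 + D v k x ^ 2) + 1 / 4 * (1 - (u x ^ 2 + v x ^ 2)) ^ 2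

/-- The stress tensor `∂_iψ · ∂_jψ - δ_ij e + c (δ_{i0} β ∂_jv - δ_ij β ∂₀v)` of `ψ = u + iv`, with
energy density `e`. The factor `β` stands for `u - 1` up to a function of `v` alone, which does not
change `∂₀(β ∂_jv) - ∂_j(β ∂₀v) = ∂₀u ∂_jv - ∂_ju ∂₀v`. Coordinate `0` is the direction of
propagation, written `x₁` on paper. -/
def stress {d : ℕ} [NeZero d] (c : ℝ) (u v β : Ed d → ℝ) (i j : Fin d) (x : Ed d) : ℝ :=
  (D u i x * D u j x + D v i x * D v j x - if i = j then eD u v x else 0) +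
    c * ((if i = 0 then β x * D v j x else 0) - if i = j then β x * D v 0 x else 0)

section Conservation
variable {d : ℕ} {u v : Ed d → ℝ}

theorem eD_contDiff (hu : ContDiff ℝ 2 u) (hv : ContDiff ℝ 2 v) : ContDiff ℝ 1 (eD u v) := by
  have h1 := hu.of_le (m := 1) (by norm_num)
  have h2 := hv.of_le (m := 1) (by norm_num)
  have h3 := fun k => D_contDiff hu k
  have h4 := fun k => D_contDiff hv k
  unfold eD
  fun_prop

theorem D_eD (hu : ContDiff ℝ 2 u) (hv : ContDiff ℝ 2 v) (j : Fin d) (x : Ed d) :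
    D (eD u v) j x = ∑ k, (D u k x * D (D u j) k x + D v k x * D (D v j) k x)
      - (1 - (u x ^ 2 + v x ^ 2)) * (u x * D u j x + v x * D v j x) := by
  have h1 : DifferentiableAt ℝ u x := hu.differentiable two_ne_zero x
  have h2 : DifferentiableAt ℝ v x := hv.differentiable two_ne_zero x
  have h3 := fun k => (D_contDiff hu k).differentiable one_ne_zero x
  have h4 := fun k => (D_contDiff hv k).differentiable one_ne_zero x
  unfold eD
  rw [D_add (by fun_prop) (by fun_prop), D_const_mul _ (by fun_prop), D_const_mul _ (by fun_prop),
    D_sq (by fun_prop), D_sub (by fun_prop) (by fun_prop), D_add (by fun_prop) (by fun_prop),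
    D_sq h1, D_sq h2, D_const, D_sum (fun k => by fun_prop)]
  have h5 : ∀ k, D (fun y => D u k y ^ 2 + D v k y ^ 2) j x
      = 2 * (D u k x * D (D u j) k x + D v k x * D (D v j) k x) := fun k => by
    rw [D_add (by fun_prop) (by fun_prop), D_sq (h3 k), D_sq (h4 k), D_symm hu k j, D_symm hv k j]
    ring
  simp only [h5, ← Finset.mul_sum]
  ring

variable [NeZero d] {c : ℝ} {β : Ed d → ℝ}

theorem stress_contDiff (hu : ContDiff ℝ 2 u) (hv : ContDiff ℝ 2 v) (hβ : ContDiff ℝ 1 β)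
    (i j : Fin d) : ContDiff ℝ 1 (stress c u v β i j) := by
  have h3 := fun k => D_contDiff hu k
  have h4 := fun k => D_contDiff hv k
  have h5 := eD_contDiff hu hv
  unfold stress
  split_ifs <;> fun_prop

/-- Conservation law: each column of the stress tensor is divergence free. The hypotheses `hre` and
`him` are the real and imaginary parts of the traveling wave equation at `x`, and the divergence is
the scalar product of that equation with `∂_jψ`. -/
theorem div_stress (hu : ContDiff ℝ 2 u) (hv : ContDiff ℝ 2 v) (hβ : ContDiff ℝ 1 β)
    {x : Ed d} {γ : ℝ} (hβ' : ∀ i, D β i x = D u i x - γ * D v i x)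
    (hre : -(c * D v 0 x) + ∑ i, D (D u i) i x + (1 - (u x ^ 2 + v x ^ 2)) * u x = 0)
    (him : c * D u 0 x + ∑ i, D (D v i) i x + (1 - (u x ^ 2 + v x ^ 2)) * v x = 0)
    (j : Fin d) : ∑ i, D (stress c u v β i j) i x = 0 := by
  have h3 := fun k => (D_contDiff hu k).differentiable one_ne_zero x
  have h4 := fun k => (D_contDiff hv k).differentiable one_ne_zero x
  have h5 := (eD_contDiff hu hv).differentiable one_ne_zero x
  have h6 := hβ.differentiable one_ne_zero x
  have hite : ∀ (p : Prop) [Decidable p] (f : Ed d → ℝ), DifferentiableAt ℝ f x →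
      DifferentiableAt ℝ (fun y => if p then f y else 0) x := by
    intro p _ f hf
    split_ifs
    exacts [hf, differentiableAt_const _]
  have key : ∀ i, D (stress c u v β i j) i x =
      D (D u i) i x * D u j x + D v j x * D (D v i) i x
      + (D u i x * D (D u j) i x + D v i x * D (D v j) i x)
      - (if i = j then D (eD u v) i x else 0)
      + c * ((if i = 0 then D β i x * D v j x + β x * D (D v j) i x else 0)
        - (if i = j then D β i x * D v 0 x + β x * D (D v 0) i x else 0)) := by
    intro i
    unfold stress
    have i1 := hite (i = j) _ h5
    have i2 := hite (i = 0) (fun y => β y * D v j y) (by fun_prop)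
    have i3 := hite (i = j) (fun y => β y * D v 0 y) (by fun_prop)
    rw [D_add (by fun_prop) (by fun_prop), D_const_mul _ (by fun_prop),
      D_sub (by fun_prop) i1, D_sub i2 i3,
      D_add (by fun_prop) (by fun_prop), D_ite, D_ite, D_ite, D_mul (h3 i) (h3 j),
      D_mul (h4 i) (h4 j), D_mul h6 (h4 j), D_mul h6 (h4 0)]
    ring
  simp only [key, Finset.sum_add_distrib, Finset.sum_sub_distrib, ← Finset.mul_sum,
    ← Finset.sum_mul, Finset.sum_ite_eq', Finset.mem_univ, if_true]
  rw [D_eD hu hv, hβ', hβ', D_symm hv 0 j, Finset.sum_add_distrib]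
  linear_combination D u j x * hre + D v j x * him

end Conservation

/-! ### The Pohozaev identity -/

/-- A globally `C¹` function `g` for which `v ↦ 1 + g v` parametrizes the unit circle near the
point `1`, for `|v| ≤ 1 / 4`. -/
theorem exists_graph : ∃ g : ℝ → ℝ, ContDiff ℝ 1 g ∧
    ∀ s, |s| ≤ 1 / 4 → 0 ≤ 1 + g s ∧ (1 + g s) ^ 2 = 1 - s ^ 2 := by
  -- The bump keeps the argument of the square root positive everywhere.
  let b : ContDiffBump (0 : ℝ) := ⟨1 / 4, 1 / 2, by norm_num, by norm_num⟩
  have hpos : ∀ s, 0 < 1 - b s * s ^ 2 := by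
    intro s
    by_cases hs : |s| < 1 / 2
    · have h1 := b.le_one (x := s)
      have h2 : s ^ 2 < 1 := by rw [← sq_abs]; nlinarith [abs_nonneg s]
      nlinarith [b.nonneg (x := s), sq_nonneg s]
    · have : b s = 0 := b.zero_of_le_dist (by simpa [b, dist_eq_norm] using hs)
      simp [this]
  refine ⟨fun s => √(1 - b s * s ^ 2) - 1, ?_, fun s hs => ?_⟩
  · refine ContDiff.sub (ContDiff.sqrt ?_ fun s => (hpos s).ne') contDiff_const
    exact contDiff_const.sub (b.contDiff.mul (by fun_prop))
  · have h1 : b s = 1 := b.one_of_mem_closedBall (by simpa [b] using hs)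
    have h2 := hpos s
    rw [h1, one_mul] at h2
    simp only [h1, one_mul, add_sub_cancel]
    exact ⟨Real.sqrt_nonneg _, Real.sq_sqrt h2.le⟩

/-- The Pohozaev identity for the real and imaginary parts `u`, `v` of `ψ`: integrate the trace of
the stress tensor with `β = u - 1 - g v`, then replace `β` by `u - 1` in the momentum. -/
theorem pohozaev_real {d : ℕ} [NeZero d] {c : ℝ} {u v : Ed d → ℝ}
    (hu : ContDiff ℝ 2 u) (hv : ContDiff ℝ 2 v)
    (hulim : Tendsto u (cocompact _) (𝓝 1)) (hvlim : Tendsto v (cocompact _) (𝓝 0))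
    (hre : ∀ x, -(c * D v 0 x) + ∑ i, D (D u i) i x + (1 - (u x ^ 2 + v x ^ 2)) * u x = 0)
    (him : ∀ x, c * D u 0 x + ∑ i, D (D v i) i x + (1 - (u x ^ 2 + v x ^ 2)) * v x = 0)
    (hG : Integrable fun x => ∑ k, (D u k x ^ 2 + D v k x ^ 2))
    (hP : Integrable fun x => (1 - (u x ^ 2 + v x ^ 2)) ^ 2)
    (hint : Integrable fun x => D v 0 x * (u x - 1)) :
    ((d : ℝ) - 2) / 2 * (∫ x, ∑ k, (D u k x ^ 2 + D v k x ^ 2))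
      + ((d : ℝ) - 1) * c * (∫ x, D v 0 x * (u x - 1))
      + (d : ℝ) / 4 * (∫ x, (1 - (u x ^ 2 + v x ^ 2)) ^ 2) = 0 := by
  obtain ⟨g, hg, hgs⟩ := exists_graph
  set β : Ed d → ℝ := fun x => u x - 1 - g (v x) with hβdef
  have hu1 : ContDiff ℝ 1 u := hu.of_le (by norm_num)
  have hv1 : ContDiff ℝ 1 v := hv.of_le (by norm_num)
  have hβ : ContDiff ℝ 1 β := (hu1.sub contDiff_const).sub (hg.comp hv1)
  have hDu : ∀ k, Continuous (D u k) := fun k => D_continuous hu1 k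
  have hDv : ∀ k, Continuous (D v k) := fun k => D_continuous hv1 k
  have hβ' : ∀ x i, D β i x = D u i x - deriv g (v x) * D v i x := by
    intro x i
    have h1 : DifferentiableAt ℝ u x := hu1.differentiable one_ne_zero x
    have h2 : DifferentiableAt ℝ v x := hv1.differentiable one_ne_zero x
    have h3 := hg.differentiable one_ne_zero (v x)
    have h4 : DifferentiableAt ℝ (fun y => g (v y)) x := h3.comp x h2
    rw [hβdef, D_sub (by fun_prop) h4, D_sub h1 (by fun_prop), D_const,
      D_comp h3.hasDerivAt h2]
    ring
  -- Near infinity `|β| ≤ 2 |1 - |ψ|²|`, from `(u - (1 + g v)) (u + (1 + g v)) = |ψ|² - 1`.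
  have hβη : ∀ᶠ x in cocompact (Ed d), |β x| ≤ 2 * |1 - (u x ^ 2 + v x ^ 2)| := by
    filter_upwards [hulim.eventually (lt_mem_nhds (show (1 / 2 : ℝ) < 1 by norm_num)),
      (tendsto_zero_iff_abs_tendsto_zero _).1 hvlim |>.eventually
        (gt_mem_nhds (show (0 : ℝ) < 1 / 4 by norm_num))] with x hx1 hx2
    obtain ⟨h1, h2⟩ := hgs (v x) hx2.le
    have h3 : 1 - (u x ^ 2 + v x ^ 2) = -(β x * (u x + (1 + g (v x)))) := by
      simp only [hβdef]; linear_combination -h2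
    rw [h3, abs_neg, abs_mul, abs_of_pos (show 0 < u x + (1 + g (v x)) by linarith)]
    nlinarith [abs_nonneg (β x)]
  have hsq : ∀ j x, D u j x ^ 2 + D v j x ^ 2 ≤ ∑ k, (D u k x ^ 2 + D v k x ^ 2) := fun j x =>
    Finset.single_le_sum (f := fun k => D u k x ^ 2 + D v k x ^ 2)
      (fun k _ => by positivity) (Finset.mem_univ j)
  -- Near infinity `|β ∂_jv|` is at most `2 |1 - |ψ|²| |∂_jv|`, hence at most twice the geometric
  -- mean of two integrable functions.
  have hα : ∀ j, Integrable fun x => β x * D v j x := by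
    intro j
    refine (hβ.continuous.mul (hDv j)).locallyIntegrable.integrable_of_isBigO_cocompact
      (g := fun x => (∑ k, (D u k x ^ 2 + D v k x ^ 2)) + (1 - (u x ^ 2 + v x ^ 2)) ^ 2) ?_
      ((hG.add hP).integrableAtFilter _)
    refine Asymptotics.IsBigO.of_bound 1 ?_
    filter_upwards [hβη] with x hx
    have h1 := hsq j x
    have h0 : 0 ≤ ∑ k, (D u k x ^ 2 + D v k x ^ 2) :=
      Finset.sum_nonneg fun k _ => by positivity
    rw [one_mul, Real.norm_of_nonneg (add_nonneg h0 (sq_nonneg _)), Real.norm_eq_abs,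
      Pi.mul_apply, abs_mul]
    have h2 : |β x| * |D v j x| ≤ 2 * |1 - (u x ^ 2 + v x ^ 2)| * |D v j x| := by gcongr
    nlinarith [sq_nonneg (|1 - (u x ^ 2 + v x ^ 2)| - |D v j x|), sq_abs (D v j x),
      sq_abs (1 - (u x ^ 2 + v x ^ 2)), sq_nonneg (D u j x)]
  have hquad : ∀ i j, Integrable fun x => D u i x * D u j x + D v i x * D v j x := by
    intro i j
    refine hG.mono' (by fun_prop) (Eventually.of_forall fun x => ?_)
    have h1 := hsq i x
    have h2 := hsq j x
    rw [Real.norm_eq_abs, abs_le]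
    constructor <;>
    nlinarith [sq_nonneg (D u i x + D u j x), sq_nonneg (D v i x + D v j x),
      sq_nonneg (D u i x - D u j x), sq_nonneg (D v i x - D v j x)]
  have hE : Integrable (eD u v) := (hG.const_mul (1 / 2)).add (hP.const_mul (1 / 4))
  have hSint : ∀ i j, Integrable (stress c u v β i j) := by
    have hite : ∀ (p : Prop) [Decidable p] (f : Ed d → ℝ), Integrable f →
        Integrable fun y => if p then f y else 0 := by
      intro p _ f hf
      split_ifs
      exacts [hf, integrable_zero _ _ _]
    exact fun i j => ((hquad i j).sub (hite _ _ hE)).add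
      (((hite _ _ (hα j)).sub (hite _ _ (hα 0))).const_mul c)
  have hS : ∀ j, ∫ x, stress c u v β j j x = 0 := fun j =>
    integral_eq_zero_of_div_eq_zero (fun i => stress c u v β i j)
      (fun i => stress_contDiff hu hv hβ i j) (fun i => hSint i j)
      (fun x => div_stress hu hv hβ (hβ' x) (hre x) (him x) j) j
  have htr : ∀ x, ∑ j, stress c u v β j j x =
      (1 - (d : ℝ) / 2) * ∑ k, (D u k x ^ 2 + D v k x ^ 2)
      - (d : ℝ) / 4 * (1 - (u x ^ 2 + v x ^ 2)) ^ 2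
      + c * (1 - (d : ℝ)) * (β x * D v 0 x) := by
    intro x
    simp only [stress, eD, if_true, Finset.sum_add_distrib, Finset.sum_sub_distrib,
      ← Finset.mul_sum, Finset.sum_ite_eq', Finset.mem_univ, Finset.sum_const, Finset.card_univ,
      Fintype.card_fin, nsmul_eq_mul, pow_two]
    ring
  have htrint : ∫ x, ∑ j, stress c u v β j j x = 0 := by
    rw [integral_finsetSum _ fun j _ => hSint j j]
    simp [hS]
  simp only [htr] at htrint
  have hGP : Integrable fun x => (1 - (d : ℝ) / 2) * ∑ k, (D u k x ^ 2 + D v k x ^ 2)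
      - (d : ℝ) / 4 * (1 - (u x ^ 2 + v x ^ 2)) ^ 2 := (hG.const_mul _).sub (hP.const_mul _)
  rw [integral_add hGP ((hα 0).const_mul _), integral_sub (hG.const_mul _) (hP.const_mul _), integral_const_mul, integral_const_mul,
    integral_const_mul] at htrint
  -- The momenta differ by the integral of `g(v) ∂₀v = ∂₀(F ∘ v)`, where `F ∘ v` tends to `F 0 = 0`
  -- at infinity; this derivative is integrable as a difference of two integrable functions.
  have hmom : ∫ x, β x * D v 0 x = ∫ x, D v 0 x * (u x - 1) := by
    set F : ℝ → ℝ := fun s => ∫ t in (0 : ℝ)..s, g t with hF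
    have hF' : ∀ s, HasDerivAt F (g s) s := fun s =>
      hg.continuous.integral_hasStrictDerivAt 0 s |>.hasDerivAt
    have hF1 : ContDiff ℝ 1 F := by
      rw [contDiff_one_iff_deriv]
      refine ⟨fun s => (hF' s).differentiableAt, ?_⟩
      rw [funext fun s => (hF' s).deriv]
      exact hg.continuous
    have hFlim : Tendsto (fun x => F (v x)) (cocompact (Ed d)) (𝓝 0) := by
      have := (hF1.continuous.tendsto 0).comp hvlim
      simpa [hF] using! this
    have hDF : ∀ x, D (fun y => F (v y)) 0 x = D v 0 x * (u x - 1) - β x * D v 0 x := by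
      intro x
      rw [D_comp (hF' (v x)) (hv1.differentiable one_ne_zero x)]
      simp only [hβdef]
      ring
    have h0 : ∫ x, D (fun y => F (v y)) 0 x = 0 := by
      refine integral_partial_eq_zero _ (hF1.comp hv1) hFlim 0 ?_
      exact (hint.sub (hα 0)).congr (Eventually.of_forall fun x => (hDF x).symm)
    simp only [hDF] at h0
    rw [integral_sub hint (hα 0)] at h0
    linarith
  rw [hmom] at htrint
  linear_combination -htrint

/-- the Pohozaev identity for finite energy traveling waves. -/
theorem statement5 (d : ℕ) [NeZero d] (hd : d = 2 ∨ d = 3) (c : ℝ)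
    (ψ : Ed d → ℂ) (hsm : ContDiff ℝ (⊤ : ℕ∞) ψ) (heq : GPeq c ψ)
    (hfe : FiniteEnergy ψ) (hlim : Tendsto ψ (cocompact (Ed d)) (𝓝 1))
    (hint : Integrable fun x => (pd ψ 0 x).im * ((ψ x).re - 1)) :
    ((d : ℝ) - 2) / 2 * (∫ x, gradSq ψ x) - ((d : ℝ) - 1) * c * mom ψ
      + (d : ℝ) / 4 * (∫ x, (1 - ‖ψ x‖ ^ 2) ^ 2) = 0 := by
  have hψ2 : ContDiff ℝ 2 ψ := contDiff_infty.1 hsm 2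
  have hψd : ∀ x, DifferentiableAt ℝ ψ x := hsm.differentiable (by simp)
  set u : Ed d → ℝ := fun x => (ψ x).re with hudef
  set v : Ed d → ℝ := fun x => (ψ x).im with hvdef
  have hDre : ∀ (f : Ed d → ℂ) (x : Ed d) (i : Fin d), DifferentiableAt ℝ f x →
      D (fun y => (f y).re) i x = (pd f i x).re := by
    intro f x i hf
    have h : fderiv ℝ (fun y => (f y).re) x = reCLM.comp (fderiv ℝ f x) :=
      (reCLM.hasFDerivAt.comp x hf.hasFDerivAt).fderiv
    simp [D, pd, h]
  have hDim : ∀ (f : Ed d → ℂ) (x : Ed d) (i : Fin d), DifferentiableAt ℝ f x →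
      D (fun y => (f y).im) i x = (pd f i x).im := by
    intro f x i hf
    have h : fderiv ℝ (fun y => (f y).im) x = imCLM.comp (fderiv ℝ f x) :=
      (imCLM.hasFDerivAt.comp x hf.hasFDerivAt).fderiv
    simp [D, pd, h]
  have hpd : ∀ (i : Fin d) (x : Ed d), DifferentiableAt ℝ (pd ψ i) x := fun i x =>
    ((hψ2.fderiv_right (m := 1) (by norm_num)).clm_apply
      contDiff_const).differentiable one_ne_zero x
  have hDu : ∀ i, D u i = fun x => (pd ψ i x).re := fun i => funext fun x => hDre ψ x i (hψd x)
  have hDv : ∀ i, D v i = fun x => (pd ψ i x).im := fun i => funext fun x => hDim ψ x i (hψd x)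
  have hu : ContDiff ℝ 2 u := reCLM.contDiff.comp hψ2
  have hv : ContDiff ℝ 2 v := imCLM.contDiff.comp hψ2
  have hulim : Tendsto u (cocompact _) (𝓝 1) := (continuous_re.tendsto 1).comp hlim
  have hvlim : Tendsto v (cocompact _) (𝓝 0) := (continuous_im.tendsto 1).comp hlim
  have hnorm : ∀ x, ‖ψ x‖ ^ 2 = u x ^ 2 + v x ^ 2 := fun x => by
    rw [Complex.sq_norm, Complex.normSq_apply]; simp only [hudef, hvdef]; ring
  have hgrad : ∀ x, gradSq ψ x = ∑ k, (D u k x ^ 2 + D v k x ^ 2) := fun x => by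
    unfold gradSq
    refine Finset.sum_congr rfl fun k _ => ?_
    rw [Complex.sq_norm, Complex.normSq_apply, hDu, hDv]; ring
  have hlapre : ∀ x, (lap ψ x).re = ∑ i, D (D u i) i x := fun x => by
    simp only [hDu]
    rw [lap, Complex.re_sum]
    exact Finset.sum_congr rfl fun i _ => (hDre _ x i (hpd i x)).symm
  have hlapim : ∀ x, (lap ψ x).im = ∑ i, D (D v i) i x := fun x => by
    simp only [hDv]
    rw [lap, Complex.im_sum]
    exact Finset.sum_congr rfl fun i _ => (hDim _ x i (hpd i x)).symm
  have hcast : ∀ x, (1 - (‖ψ x‖ : ℂ) ^ 2) = ((1 - (u x ^ 2 + v x ^ 2) : ℝ) : ℂ) := fun x => by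
    rw [← hnorm]; push_cast; ring
  have hre : ∀ x, -(c * D v 0 x) + ∑ i, D (D u i) i x + (1 - (u x ^ 2 + v x ^ 2)) * u x = 0 := by
    intro x
    have h := congrArg Complex.re (heq x)
    rw [hcast, Complex.add_re, Complex.add_re, Complex.re_ofReal_mul, hlapre, mul_assoc,
      Complex.I_mul_re, Complex.im_ofReal_mul] at h
    rw [hDv]
    exact h
  have him : ∀ x, c * D u 0 x + ∑ i, D (D v i) i x + (1 - (u x ^ 2 + v x ^ 2)) * v x = 0 := by
    intro x
    have h := congrArg Complex.im (heq x)
    rw [hcast, Complex.add_im, Complex.add_im, Complex.im_ofReal_mul, hlapim, mul_assoc,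
      Complex.I_mul_im, Complex.re_ofReal_mul] at h
    rw [hDu]
    exact h
  have hucont := hu.continuous
  have hvcont := hv.continuous
  have hDuc : ∀ k, Continuous (D u k) := fun k => D_continuous (hu.of_le (by norm_num)) k
  have hDvc : ∀ k, Continuous (D v k) := fun k => D_continuous (hv.of_le (by norm_num)) k
  have hG0 : ∀ x, 0 ≤ ∑ k, (D u k x ^ 2 + D v k x ^ 2) := fun x =>
    Finset.sum_nonneg fun k _ => by positivity
  have hG : Integrable fun x => ∑ k, (D u k x ^ 2 + D v k x ^ 2) := by
    refine (Integrable.const_mul hfe 2).mono' (by fun_prop) (Eventually.of_forall fun x => ?_)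
    rw [Real.norm_of_nonneg (hG0 x), eDen, hgrad, hnorm]
    nlinarith [sq_nonneg (1 - (u x ^ 2 + v x ^ 2))]
  have hP : Integrable fun x => (1 - (u x ^ 2 + v x ^ 2)) ^ 2 := by
    refine (Integrable.const_mul hfe 4).mono' (by fun_prop) (Eventually.of_forall fun x => ?_)
    rw [Real.norm_of_nonneg (sq_nonneg _), eDen, hgrad, hnorm]
    nlinarith [hG0 x]
  have hmom : mom ψ = -∫ x, D v 0 x * (u x - 1) := by rw [hDv]; rfl
  have hint' : Integrable fun x => D v 0 x * (u x - 1) := by rw [hDv]; exact hint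
  have := pohozaev_real hu hv hulim hvlim hre him hG hP hint'
  simp only [hgrad, hnorm]
  rw [hmom]
  linear_combination this
end
end

section
/- Let d ∈ {2,3}, c ∈ ℝ, and let ψ be a finite energy solution of the Gross–Pitaevskii traveling wave equation with speed c on ℝ^d, normalized so that ψ(x) → 1 as |x| → ∞ and such that ∂_{x₁}(Im ψ)(Re ψ − 1) is integrable on ℝ^d. Define A(ψ) = (1/2) Σ_{j=2}^{d} ∫_{ℝ^d} |∂_{x_j} ψ|² and B(ψ) = (1/2) ∫_{ℝ^d} |∂_{x₁} ψ|² + (1/4) ∫_{ℝ^d} (1 − |ψ|²)² − c P(ψ). Then (d−3) A(ψ) + (d−1) B(ψ) = 0; consequently I^c(ψ) = (2/(d−1)) A(ψ) ≥ 0, and I^c(ψ) = 0 if and only if ψ is identically equal to 1. -/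
/-!
Let `ψ = u + iv` and `j ≥ 2` (1-based). Translation invariance in `x_j` gives a divergence-free
Noether current `Y`, with components

`Y_k = ⟨∂_j ψ, ∂_k ψ⟩ - δ_{jk} e(ψ) + c F (δ_{k1} ∂_j v - δ_{kj} ∂_1 v)`,

where `e(ψ)` is the energy density. It is divergence free for `F = u - 1`, and also for
`F = u - s(v)` with any smooth `s`, because `dv ∧ d(s(v)) = 0`. Taking `s(v) = √(1 - v²)` near
`v = 0` makes `F` comparable to `1 - |ψ|²` near infinity, so that `Y` is integrable using finite
energy alone, with no decay rate for `ψ - 1` and no integrability of `(u - 1) ∂_j v`.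

Testing `div Y = 0` against rescaled truncations of `x_j` gives `∫ Y_j = 0`
(`integral_component_eq_zero`), i.e. `∫ |∂_j ψ|² = E(ψ) + c ∫ (u - s(v)) ∂_1 v`. The difference
`(s(v) - 1) ∂_1 v` is integrable, and its integral vanishes because `v → 0` at infinity
(`integral_comp_mul_dd_eq_zero`). Hence `∫ |∂_j ψ|² = E(ψ) - c P(ψ) = I^c(ψ)` for every transverse
direction (`integral_pd_sq_eq_lagr`). Summing over `j` yields `2 A = (d - 1) I^c`, which with
`I^c = A + B` is the identity claimed. If `I^c = 0`, then `∂_j ψ = 0` for a transverse `j`, and the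
limit at infinity forces `ψ = 1` (`eq_one_of_pd_eq_zero`).
-/


open MeasureTheory Filter Complex Metric Topology

noncomputable section

/-! ### Calculus of partial derivatives -/

/-- Partial derivative of a real function in the `i`-th coordinate direction. -/
def dd {d : ℕ} (i : Fin d) (f : Ed d → ℝ) (x : Ed d) : ℝ :=
  fderiv ℝ f x (EuclideanSpace.single i 1)

/-- Smoothness of a real function on `ℝ^d`. -/
abbrev Sm {d : ℕ} (f : Ed d → ℝ) : Prop := ContDiff ℝ (⊤ : ℕ∞) f

lemma Sm.diff {d : ℕ} {f : Ed d → ℝ} (hf : Sm f) (x : Ed d) : DifferentiableAt ℝ f x :=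
  (hf.differentiable (by simp)) x

lemma Sm.dd {d : ℕ} {f : Ed d → ℝ} (hf : Sm f) (i : Fin d) : Sm (dd i f) :=
  (hf.fderiv_right (m := ((⊤ : ℕ∞) : WithTop ℕ∞)) (by simp)).clm_apply contDiff_const

lemma dd_comm {d : ℕ} {f : Ed d → ℝ} (hf : Sm f) (i j : Fin d) (x : Ed d) :
    dd i (dd j f) x = dd j (dd i f) x := by
  have hd : DifferentiableAt ℝ (fderiv ℝ f) x :=
    ((hf.fderiv_right (m := ((⊤ : ℕ∞) : WithTop ℕ∞)) (by simp)).differentiable (by simp)) x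
  have h : ∀ a b : Ed d, fderiv ℝ (fun y => fderiv ℝ f y a) x b
      = fderiv ℝ (fderiv ℝ f) x b a := by
    intro a b
    rw [fderiv_clm_apply hd (differentiableAt_const a)]
    simp
  have hs : IsSymmSndFDerivAt ℝ f x :=
    hf.contDiffAt.isSymmSndFDerivAt (by
      rw [minSmoothness_of_isRCLikeNormedField]
      exact WithTop.coe_le_coe.mpr le_top)
  unfold dd
  rw [h, h, hs]

section rules
variable {d : ℕ} {f g : Ed d → ℝ}

lemma dd_add (hf : Sm f) (hg : Sm g) (i : Fin d) (x : Ed d) :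
    dd i (fun y => f y + g y) x = dd i f x + dd i g x := by
  unfold dd
  rw [fderiv_fun_add (hf.diff x) (hg.diff x)]; rfl

lemma dd_sub (hf : Sm f) (hg : Sm g) (i : Fin d) (x : Ed d) :
    dd i (fun y => f y - g y) x = dd i f x - dd i g x := by
  unfold dd
  rw [fderiv_fun_sub (hf.diff x) (hg.diff x)]; rfl

lemma dd_mul (hf : Sm f) (hg : Sm g) (i : Fin d) (x : Ed d) :
    dd i (fun y => f y * g y) x = f x * dd i g x + g x * dd i f x := by
  unfold dd
  rw [fderiv_fun_mul (hf.diff x) (hg.diff x)]; rfl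

lemma dd_const (a : ℝ) (i : Fin d) (x : Ed d) : dd i (fun _ => a) x = 0 := by
  simp [dd]

lemma dd_const_mul (a : ℝ) (hf : Sm f) (i : Fin d) (x : Ed d) :
    dd i (fun y => a * f y) x = a * dd i f x := by
  rw [dd_mul contDiff_const hf, dd_const]; ring

lemma dd_sum {ι : Type*} (s : Finset ι) (F : ι → Ed d → ℝ) (hF : ∀ k, Sm (F k))
    (i : Fin d) (x : Ed d) :
    dd i (fun y => ∑ k ∈ s, F k y) x = ∑ k ∈ s, dd i (F k) x := by
  unfold dd
  rw [fderiv_fun_sum (fun k _ => (hF k).diff x)]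
  simp

lemma dd_comp {s : ℝ → ℝ} (hs : Differentiable ℝ s) (hf : Sm f) (i : Fin d) (x : Ed d) :
    dd i (fun y => s (f y)) x = deriv s (f x) * dd i f x := by
  unfold dd
  have := ((hs (f x)).hasDerivAt.comp_hasFDerivAt x (hf.diff x).hasFDerivAt).fderiv
  rw [show (fun y => s (f y)) = s ∘ f from rfl, this]
  simp

end rules

/-! ### Integrals of derivatives and divergence-free fields -/

lemma integral_dd_eq_zero {d : ℕ} {f : Ed d → ℝ} (hd : Differentiable ℝ f)
    (hi : Integrable f) (i : Fin d) (hi' : Integrable (dd i f)) : ∫ x, dd i f x = 0 := by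
  have := integral_mul_fderiv_eq_neg_fderiv_mul_of_integrable (𝕜 := ℝ) (μ := volume)
    (f := fun _ : Ed d => (1 : ℝ)) (g := f) (v := EuclideanSpace.single i 1)
    (by simp) (by simp only [one_mul]; exact hi') (by simpa using hi)
    (fun x _ => differentiableAt_const _) (fun x _ => hd x)
  simpa [dd] using this

/-- An integrable divergence-free field is tested against `n Φ(x / n)`, where `Φ` is a compactly
supported function equal to the coordinate `x_j` near the origin, so that the gradient
`(∇Φ)(x / n)` is bounded and converges pointwise to `e_j`. -/
lemma integral_component_eq_zero {d : ℕ} (Y : Fin d → Ed d → ℝ) (hY : ∀ k, Sm (Y k))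
    (hi : ∀ k, Integrable (Y k)) (hdiv : ∀ x, ∑ k, dd k (Y k) x = 0) (j : Fin d) :
    ∫ x, Y j x = 0 := by
  let b : ContDiffBump (0 : Ed d) := ⟨1, 2, by norm_num, by norm_num⟩
  let Φ : Ed d → ℝ := fun x => x j * b x
  have hcoord : Sm (fun x : Ed d => x j) :=
    (EuclideanSpace.proj j : Ed d →L[ℝ] ℝ).contDiff
  have hΦ : Sm Φ := hcoord.mul b.contDiff
  have hΦc : HasCompactSupport Φ := b.hasCompactSupport.mul_left
  have hΦ0 : ∀ k, dd k Φ 0 = if k = j then 1 else 0 := by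
    intro k
    have h1 : Φ =ᶠ[𝓝 0] fun x => x j := by
      filter_upwards [b.eventuallyEq_one] with x hx
      simp [Φ, hx]
    unfold dd
    rw [h1.fderiv_eq]
    have h2 : HasFDerivAt (fun x : Ed d => x j)
        (EuclideanSpace.proj j : Ed d →L[ℝ] ℝ) 0 :=
      (EuclideanSpace.proj j : Ed d →L[ℝ] ℝ).hasFDerivAt
    rw [h2.fderiv]
    simp [eq_comm]
  have hΦk : ∀ k, Continuous (dd k Φ) := fun k => (hΦ.dd k).continuous
  have hΦkc : ∀ k, HasCompactSupport (dd k Φ) := fun k => hΦc.fderiv_apply ℝ _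
  have hbd : ∀ k, ∃ C, ∀ x, ‖dd k Φ x‖ ≤ C := fun k =>
    (hΦkc k).exists_bound_of_continuous (hΦk k)
  choose C hC using hbd
  let t : ℕ → ℝ := fun n => ((n : ℝ) + 1)⁻¹
  have ht : ∀ n, 0 < t n := fun n => by positivity
  have ht0 : Tendsto t atTop (𝓝 0) := by
    simpa [t] using tendsto_one_div_add_atTop_nhds_zero_nat (𝕜 := ℝ)
  -- weak form of `div Y = 0`
  have hweak : ∀ n, ∑ k, ∫ x, Y k x * dd k Φ (t n • x) = 0 := by
    intro n
    let g : Ed d → ℝ := fun x => (t n)⁻¹ * Φ (t n • x)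
    have hg : Sm g := contDiff_const.mul (hΦ.comp (contDiff_id.const_smul (t n)))
    have hgc : HasCompactSupport g := by
      have : HasCompactSupport (fun x => Φ (t n • x)) := hΦc.comp_smul (ht n).ne'
      exact this.mul_left
    have hgd : ∀ k x, dd k g x = dd k Φ (t n • x) := by
      intro k x
      have h1 : HasFDerivAt (fun y : Ed d => t n • y) (t n • ContinuousLinearMap.id ℝ (Ed d)) x :=
        (hasFDerivAt_id x).const_smul (t n)
      have h2 := (((hΦ.diff (t n • x)).hasFDerivAt.comp x h1).const_mul (t n)⁻¹).fderiv
      unfold dd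
      change fderiv ℝ (fun y => (t n)⁻¹ * (Φ ∘ fun y => t n • y) y) x _ = _
      rw [h2]
      simp [(ht n).ne']
    have hparts : ∀ k, ∫ x, Y k x * dd k Φ (t n • x) = - ∫ x, dd k (Y k) x * g x := by
      intro k
      simp_rw [← hgd]
      refine integral_mul_fderiv_eq_neg_fderiv_mul_of_integrable ?_ ?_ ?_
        (fun x _ => (hY k).diff x) (fun x _ => hg.diff x)
      · exact (((hY k).dd k).continuous.mul hg.continuous).integrable_of_hasCompactSupport
          hgc.mul_left
      · exact ((hY k).continuous.mul (hg.dd k).continuous).integrable_of_hasCompactSupport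
          (hgc.fderiv_apply ℝ _).mul_left
      · exact ((hY k).continuous.mul hg.continuous).integrable_of_hasCompactSupport
          hgc.mul_left
    rw [Finset.sum_congr rfl fun k _ => hparts k, Finset.sum_neg_distrib,
      ← integral_finsetSum]
    · simp [← Finset.sum_mul, hdiv]
    · intro k _
      exact (((hY k).dd k).continuous.mul hg.continuous).integrable_of_hasCompactSupport
          hgc.mul_left
  have hlim : Tendsto (fun n => ∑ k, ∫ x, Y k x * dd k Φ (t n • x)) atTop
      (𝓝 (∑ k, ∫ x, Y k x * (if k = j then 1 else 0))) := by
    refine tendsto_finsetSum _ fun k _ => ?_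
    refine tendsto_integral_of_dominated_convergence (fun x => ‖Y k x‖ * C k) ?_ ?_ ?_ ?_
    · intro n
      exact ((hY k).continuous.mul
        ((hΦk k).comp (continuous_const_smul (t n)))).aestronglyMeasurable
    · exact (hi k).norm.mul_const _
    · intro n
      refine Eventually.of_forall fun x => ?_
      rw [norm_mul]
      exact mul_le_mul_of_nonneg_left (hC k _) (norm_nonneg _)
    · refine Eventually.of_forall fun x => ?_
      refine Tendsto.const_mul _ ?_
      rw [← hΦ0 k]
      refine ((hΦk k).tendsto 0).comp ?_
      simpa using ht0.smul_const x
  simp_rw [hweak] at hlim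
  have := tendsto_nhds_unique hlim tendsto_const_nhds
  rw [Finset.sum_eq_single j (fun k _ hk => by simp [hk]) (by simp)] at this
  simpa using this

/-- If `v → 0` at infinity and `h(0) = 0`, then `h(v) ∂_i v` integrates to zero as soon as it is
integrable. Multiplying `h` by a factor that vanishes near `0` makes `h(v) ∂_i v` the
`i`-th derivative of a compactly supported function of `v`; the factor is then removed by dominated
convergence. -/
lemma integral_comp_mul_dd_eq_zero {d : ℕ} {v : Ed d → ℝ} (hv : Sm v)
    (hv0 : Tendsto v (cocompact (Ed d)) (𝓝 0)) {h : ℝ → ℝ} (hh : Continuous h) (h0 : h 0 = 0)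
    (i : Fin d) (hint : Integrable fun x => h (v x) * dd i v x) :
    ∫ x, h (v x) * dd i v x = 0 := by
  let τ : ℕ → ℝ → ℝ := fun n t => min 1 (max 0 (n * |t| - 1))
  have hτc : ∀ n, Continuous (τ n) := fun n => by fun_prop
  have hτ0 : ∀ n t, 0 ≤ τ n t := fun n t => le_min zero_le_one (le_max_left _ _)
  have hτ1 : ∀ n t, τ n t ≤ 1 := fun n t => min_le_left _ _
  have hz : ∀ n : ℕ, ∫ x, τ n (v x) * (h (v x) * dd i v x) = 0 := by
    intro n
    let k : ℝ → ℝ := fun t => τ n t * h t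
    have hk : Continuous k := (hτc n).mul hh
    let K : ℝ → ℝ := fun t => ∫ s in (0 : ℝ)..t, k s
    have hK : ∀ t, HasDerivAt K (k t) t := fun t =>
      intervalIntegral.integral_hasDerivAt_right (hk.intervalIntegrable _ _)
        (hk.stronglyMeasurableAtFilter _ _) hk.continuousAt
    have hKd : Differentiable ℝ K := fun t => (hK t).differentiableAt
    have hKz : ∀ t : ℝ, n * |t| ≤ 1 → K t = 0 := by
      intro t ht
      refine intervalIntegral.integral_zero_ae (Eventually.of_forall fun s hs => ?_)
      have hst : |s| ≤ |t| := by
        have := Set.uIoc_subset_uIcc hs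
        have h3 := Set.abs_sub_left_of_mem_uIcc this
        simpa using h3
      have : (n : ℝ) * |s| ≤ n * |t| := by gcongr
      have h4 : max 0 ((n : ℝ) * |s| - 1) = 0 := max_eq_left (by linarith)
      simp [k, τ, h4]
    have hcs : HasCompactSupport (fun x => K (v x)) := by
      rw [hasCompactSupport_iff_eventuallyEq]
      have h5 : Tendsto (fun x => (n : ℝ) * |v x|) (cocompact (Ed d)) (𝓝 0) := by
        simpa using (hv0.abs).const_mul (n : ℝ)
      have h6 := h5.eventually (eventually_le_nhds (zero_lt_one))
      rw [coclosedCompact_eq_cocompact]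
      filter_upwards [h6] with x hx
      exact hKz _ hx
    have hdd : ∀ x, dd i (fun y => K (v y)) x = τ n (v x) * (h (v x) * dd i v x) := by
      intro x
      rw [dd_comp hKd hv, (hK _).deriv]
      simp only [k]; ring
    simp_rw [← hdd]
    refine integral_dd_eq_zero (hKd.comp (hv.differentiable (by simp))) ?_ i ?_
    · exact (hKd.continuous.comp hv.continuous).integrable_of_hasCompactSupport hcs
    · have hc : Continuous (dd i fun y => K (v y)) := by
        rw [funext hdd]
        exact ((hτc n).comp hv.continuous).mul ((hh.comp hv.continuous).mul (hv.dd i).continuous)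
      exact hc.integrable_of_hasCompactSupport (hcs.fderiv_apply ℝ _)
  have hlim : Tendsto (fun n => ∫ x, τ n (v x) * (h (v x) * dd i v x)) atTop
      (𝓝 (∫ x, h (v x) * dd i v x)) := by
    refine tendsto_integral_of_dominated_convergence _ ?_ hint.norm ?_ ?_
    · intro n
      exact (((hτc n).comp hv.continuous).mul
        ((hh.comp hv.continuous).mul (hv.dd i).continuous)).aestronglyMeasurable
    · intro n
      refine Eventually.of_forall fun x => ?_
      rw [norm_mul, Real.norm_of_nonneg (hτ0 n _)]
      exact mul_le_of_le_one_left (norm_nonneg _) (hτ1 n _)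
    · refine Eventually.of_forall fun x => ?_
      by_cases hx : v x = 0
      · simp [hx, h0]
      · have hpos : 0 < |v x| := abs_pos.mpr hx
        refine tendsto_const_nhds.congr' ?_
        have h7 : Tendsto (fun n : ℕ => (n : ℝ) * |v x|) atTop atTop :=
          tendsto_natCast_atTop_atTop.atTop_mul_const hpos
        filter_upwards [h7.eventually_ge_atTop 2] with n hn
        have : τ n (v x) = 1 := min_eq_left (le_max_of_le_right (by linarith))
        rw [this, one_mul]
  simp_rw [hz] at hlim
  exact tendsto_nhds_unique hlim tendsto_const_nhds

/-! ### The translation current in real coordinates -/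

/-- A globally smooth function that agrees with `√(1 - t²)` near `0`. On the arc of the unit
circle near `1` it gives the real part in terms of the imaginary part. -/
lemma exists_smooth_circle : ∃ s : ℝ → ℝ, ContDiff ℝ (⊤ : ℕ∞) s ∧
    ∀ t, |t| ≤ 1 / 2 → 0 ≤ s t ∧ s t ^ 2 = 1 - t ^ 2 := by
  let b : ContDiffBump (0 : ℝ) := ⟨1 / 2, 3 / 4, by norm_num, by norm_num⟩
  have hpos : ∀ t : ℝ, 0 < 1 - t ^ 2 * b t := by
    intro t
    by_cases ht : |t| < 3 / 4
    · have h1 : t ^ 2 < (3 / 4) ^ 2 := sq_lt_sq' (abs_lt.mp ht).1 (abs_lt.mp ht).2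
      nlinarith [b.nonneg (x := t), b.le_one (x := t), sq_nonneg t]
    · have : b t = 0 := b.zero_of_le_dist (by simpa [b, Real.dist_eq] using ht)
      simp [this]
  refine ⟨fun t => √(1 - t ^ 2 * b t), ?_, ?_⟩
  · exact (contDiff_const.sub ((contDiff_id.pow 2).mul b.contDiff)).sqrt
      fun t => (hpos t).ne'
  · intro t ht
    have : b t = 1 := b.one_of_mem_closedBall (by simpa [b, Real.dist_eq] using ht)
    refine ⟨Real.sqrt_nonneg _, ?_⟩
    rw [Real.sq_sqrt (hpos t).le, this, mul_one]

section current
variable {d : ℕ} {c : ℝ} {ψ : Ed d → ℂ}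

lemma dd_re (hsm : ContDiff ℝ (⊤ : ℕ∞) ψ) (i : Fin d) (x : Ed d) :
    dd i (fun y => (ψ y).re) x = (pd ψ i x).re := by
  have h := (reCLM.hasFDerivAt.comp x (hsm.differentiable (by simp) x).hasFDerivAt).fderiv
  unfold dd
  rw [show (fun y => (ψ y).re) = reCLM ∘ ψ from rfl, h]
  rfl

lemma dd_im (hsm : ContDiff ℝ (⊤ : ℕ∞) ψ) (i : Fin d) (x : Ed d) :
    dd i (fun y => (ψ y).im) x = (pd ψ i x).im := by
  have h := (imCLM.hasFDerivAt.comp x (hsm.differentiable (by simp) x).hasFDerivAt).fderiv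
  unfold dd
  rw [show (fun y => (ψ y).im) = imCLM ∘ ψ from rfl, h]
  rfl

lemma contDiff_pd_s6 (hsm : ContDiff ℝ (⊤ : ℕ∞) ψ) (i : Fin d) :
    ContDiff ℝ (⊤ : ℕ∞) (pd ψ i) :=
  (hsm.fderiv_right (m := ((⊤ : ℕ∞) : WithTop ℕ∞)) (by simp)).clm_apply contDiff_const

lemma gp_re [NeZero d] (hsm : ContDiff ℝ (⊤ : ℕ∞) ψ) (heq : GPeq c ψ) (x : Ed d) :
    -c * dd 0 (fun y => (ψ y).im) x + ∑ i, dd i (dd i fun y => (ψ y).re) x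
      + (1 - (ψ x).re ^ 2 - (ψ x).im ^ 2) * (ψ x).re = 0 := by
  have h := congrArg Complex.re (heq x)
  have hl : (lap ψ x).re = ∑ i, dd i (dd i fun y => (ψ y).re) x := by
    unfold lap
    rw [Complex.re_sum]
    refine Finset.sum_congr rfl fun i _ => ?_
    rw [funext (dd_re hsm i), dd_re (contDiff_pd_s6 hsm i)]
    rfl
  have hn : ((‖ψ x‖ : ℂ) ^ 2) = (((ψ x).re ^ 2 + (ψ x).im ^ 2 : ℝ) : ℂ) := by
    rw [← Complex.ofReal_pow, Complex.sq_norm, Complex.normSq_apply]; congr 1; ring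
  rw [hn] at h
  simp only [add_re, mul_re, mul_im, sub_re, sub_im, ofReal_re, ofReal_im, I_re, I_im, one_re,
    one_im, zero_re, hl] at h
  rw [dd_im hsm]
  linarith

lemma gp_im [NeZero d] (hsm : ContDiff ℝ (⊤ : ℕ∞) ψ) (heq : GPeq c ψ) (x : Ed d) :
    c * dd 0 (fun y => (ψ y).re) x + ∑ i, dd i (dd i fun y => (ψ y).im) x
      + (1 - (ψ x).re ^ 2 - (ψ x).im ^ 2) * (ψ x).im = 0 := by
  have h := congrArg Complex.im (heq x)
  have hl : (lap ψ x).im = ∑ i, dd i (dd i fun y => (ψ y).im) x := by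
    unfold lap
    rw [Complex.im_sum]
    refine Finset.sum_congr rfl fun i _ => ?_
    rw [funext (dd_im hsm i), dd_im (contDiff_pd_s6 hsm i)]
    rfl
  have hn : ((‖ψ x‖ : ℂ) ^ 2) = (((ψ x).re ^ 2 + (ψ x).im ^ 2 : ℝ) : ℂ) := by
    rw [← Complex.ofReal_pow, Complex.sq_norm, Complex.normSq_apply]; congr 1; ring
  rw [hn] at h
  simp only [add_im, mul_re, mul_im, sub_re, sub_im, ofReal_re, ofReal_im, I_re, I_im, one_re,
    one_im, zero_im, hl] at h
  rw [dd_re hsm]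
  linarith

/-- Energy density of `u + iv` in real coordinates. -/
def eReal (u v : Ed d → ℝ) (x : Ed d) : ℝ :=
  1 / 2 * ∑ k, (dd k u x * dd k u x + dd k v x * dd k v x)
    + 1 / 4 * ((1 - u x * u x - v x * v x) * (1 - u x * u x - v x * v x))

/-- The Noether current of `x_j`-translations for `u + iv`. The momentum part is written with
`F = u - s(v)` in place of `u - 1`: this changes the current only by a divergence-free field. -/
def current [NeZero d] (c : ℝ) (s : ℝ → ℝ) (u v : Ed d → ℝ) (j k : Fin d) (x : Ed d) : ℝ :=
  (dd j u x * dd k u x + dd j v x * dd k v x) - (if k = j then 1 else 0) * eReal u v x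
    + ((if k = 0 then c else 0) * ((u x - s (v x)) * dd j v x)
      - (if k = j then c else 0) * ((u x - s (v x)) * dd 0 v x))

lemma Sm.eReal {u v : Ed d → ℝ} (hu : Sm u) (hv : Sm v) : Sm (eReal u v) := by
  have h1 := fun k => hu.dd k
  have h2 := fun k => hv.dd k
  unfold _root_.eReal
  exact (contDiff_const.mul (ContDiff.sum fun k _ =>
    ((h1 k).mul (h1 k)).add ((h2 k).mul (h2 k)))).add (contDiff_const.mul
    (((contDiff_const.sub (hu.mul hu)).sub (hv.mul hv)).mul
      ((contDiff_const.sub (hu.mul hu)).sub (hv.mul hv))))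

lemma Sm.current [NeZero d] {s : ℝ → ℝ} (hs : ContDiff ℝ (⊤ : ℕ∞) s) {u v : Ed d → ℝ}
    (hu : Sm u) (hv : Sm v) (j k : Fin d) : Sm (current c s u v j k) := by
  have hF : Sm fun x => u x - s (v x) := hu.sub (hs.comp hv)
  exact ((((hu.dd j).mul (hu.dd k)).add ((hv.dd j).mul (hv.dd k))).sub
    (contDiff_const.mul (hu.eReal hv))).add
    ((contDiff_const.mul (hF.mul (hv.dd j))).sub (contDiff_const.mul (hF.mul (hv.dd 0))))

lemma dd_eReal {u v : Ed d → ℝ} (hu : Sm u) (hv : Sm v) (j : Fin d) (x : Ed d) :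
    dd j (eReal u v) x = ∑ k, (dd k u x * dd j (dd k u) x + dd k v x * dd j (dd k v) x)
      - (1 - u x ^ 2 - v x ^ 2) * (u x * dd j u x + v x * dd j v x) := by
  have h1 := fun k => hu.dd k
  have h2 := fun k => hv.dd k
  have huu := hu.mul hu
  have hvv := hv.mul hv
  have h3 : ∀ k, Sm fun y => dd k u y * dd k u y + dd k v y * dd k v y :=
    fun k => ((h1 k).mul (h1 k)).add ((h2 k).mul (h2 k))
  have hc1 : Sm fun y => 1 - u y * u y := contDiff_const.sub huu
  have hw : Sm fun y => 1 - u y * u y - v y * v y := hc1.sub hvv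
  have h4 : ∀ k, dd j (fun y => dd k u y * dd k u y + dd k v y * dd k v y) x
      = 2 * (dd k u x * dd j (dd k u) x + dd k v x * dd j (dd k v) x) := by
    intro k
    rw [dd_add ((h1 k).mul (h1 k)) ((h2 k).mul (h2 k)), dd_mul (h1 k) (h1 k),
      dd_mul (h2 k) (h2 k)]
    ring
  have hsum : Sm fun y => ∑ k, (dd k u y * dd k u y + dd k v y * dd k v y) :=
    ContDiff.sum fun k _ => h3 k
  change dd j (fun y => 1 / 2 * ∑ k, (dd k u y * dd k u y + dd k v y * dd k v y)
    + 1 / 4 * ((1 - u y * u y - v y * v y) * (1 - u y * u y - v y * v y))) x = _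
  rw [dd_add (contDiff_const.mul hsum) (contDiff_const.mul (hw.mul hw)),
    dd_const_mul _ hsum, dd_const_mul _ (hw.mul hw), dd_sum _ _ h3,
    dd_mul hw hw, dd_sub hc1 hvv, dd_sub contDiff_const huu, dd_const,
    dd_mul hu hu, dd_mul hv hv, Finset.sum_congr rfl fun k _ => h4 k, ← Finset.mul_sum]
  ring

lemma div_current [NeZero d] {s : ℝ → ℝ} (hs : ContDiff ℝ (⊤ : ℕ∞) s) {u v : Ed d → ℝ}
    (hu : Sm u) (hv : Sm v)
    (hre : ∀ x, -c * dd 0 v x + ∑ i, dd i (dd i u) x + (1 - u x ^ 2 - v x ^ 2) * u x = 0)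
    (him : ∀ x, c * dd 0 u x + ∑ i, dd i (dd i v) x + (1 - u x ^ 2 - v x ^ 2) * v x = 0)
    (j : Fin d) (x : Ed d) : ∑ k, dd k (current c s u v j k) x = 0 := by
  have h1 := fun k => hu.dd k
  have h2 := fun k => hv.dd k
  have hsv : Sm fun y => s (v y) := hs.comp hv
  have hF : Sm fun y => u y - s (v y) := hu.sub hsv
  have hFd : ∀ k, dd k (fun y => u y - s (v y)) x = dd k u x - deriv s (v x) * dd k v x := by
    intro k
    rw [dd_sub hu hsv, dd_comp (hs.differentiable (by simp)) hv]
  have hT : ∀ k, Sm fun y => dd j u y * dd k u y + dd j v y * dd k v y :=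
    fun k => ((h1 j).mul (h1 k)).add ((h2 j).mul (h2 k))
  have hk : ∀ k, dd k (current c s u v j k) x =
      (dd k u x * dd j (dd k u) x + dd k v x * dd j (dd k v) x)
      + dd j u x * dd k (dd k u) x + dd j v x * dd k (dd k v) x
      - (if k = j then 1 else 0) * dd k (eReal u v) x
      + ((if k = 0 then c else 0) * dd k (fun y => (u y - s (v y)) * dd j v y) x
        - (if k = j then c else 0) * dd k (fun y => (u y - s (v y)) * dd 0 v y) x) := by
    intro k
    have hm1 : Sm fun y => (u y - s (v y)) * dd j v y := hF.mul (h2 j)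
    have hm2 : Sm fun y => (u y - s (v y)) * dd 0 v y := hF.mul (h2 0)
    have ha : Sm fun y => (if k = j then (1 : ℝ) else 0) * eReal u v y :=
      contDiff_const.mul (hu.eReal hv)
    have hb : Sm fun y => (if k = 0 then c else 0) * ((u y - s (v y)) * dd j v y) :=
      contDiff_const.mul hm1
    have hc : Sm fun y => (if k = j then c else 0) * ((u y - s (v y)) * dd 0 v y) :=
      contDiff_const.mul hm2
    unfold current
    rw [dd_add ((hT k).sub ha) (hb.sub hc), dd_sub (hT k) ha, dd_sub hb hc,
      dd_const_mul _ (hu.eReal hv), dd_const_mul _ hm1, dd_const_mul _ hm2,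
      dd_add ((h1 j).mul (h1 k)) ((h2 j).mul (h2 k)), dd_mul (h1 j) (h1 k),
      dd_mul (h2 j) (h2 k), dd_comm hu k j, dd_comm hv k j]
    ring
  rw [Finset.sum_congr rfl fun k _ => hk k]
  simp only [Finset.sum_add_distrib, Finset.sum_sub_distrib, ite_mul, one_mul, zero_mul,
    Finset.sum_ite_eq', Finset.mem_univ, if_true, ← Finset.mul_sum]
  rw [dd_eReal hu hv, dd_mul hF (h2 j), dd_mul hF (h2 0), hFd, hFd, dd_comm hv j 0,
    Finset.sum_add_distrib]
  linear_combination dd j u x * hre x + dd j v x * him x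

end current

/-! ### The Pohozaev identity -/

section pohozaev
variable {d : ℕ} {c : ℝ} {ψ : Ed d → ℂ}

lemma integrable_pd_sq (hsm : ContDiff ℝ (⊤ : ℕ∞) ψ) (hfe : FiniteEnergy ψ) (i : Fin d) :
    Integrable fun x => ‖pd ψ i x‖ ^ 2 := by
  refine (Integrable.const_mul hfe 2).mono' ?_ ?_
  · exact ((contDiff_pd_s6 hsm i).continuous.norm.pow 2).aestronglyMeasurable
  · refine Eventually.of_forall fun x => ?_
    rw [Real.norm_of_nonneg (by positivity)]
    have : ‖pd ψ i x‖ ^ 2 ≤ gradSq ψ x :=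
      Finset.single_le_sum (f := fun k => ‖pd ψ k x‖ ^ 2) (fun k _ => by positivity)
        (Finset.mem_univ i)
    unfold eDen
    nlinarith [sq_nonneg (1 - ‖ψ x‖ ^ 2)]

lemma integrable_potential (hsm : ContDiff ℝ (⊤ : ℕ∞) ψ) (hfe : FiniteEnergy ψ) :
    Integrable fun x => (1 - ‖ψ x‖ ^ 2) ^ 2 := by
  refine (Integrable.const_mul hfe 4).mono' ?_ ?_
  · exact ((continuous_const.sub (hsm.continuous.norm.pow 2)).pow 2).aestronglyMeasurable
  · refine Eventually.of_forall fun x => ?_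
    rw [Real.norm_of_nonneg (by positivity)]
    have : 0 ≤ gradSq ψ x := Finset.sum_nonneg fun k _ => by positivity
    unfold eDen
    linarith

/-- Near infinity `|u - s(v)| ≤ 2 |1 - |ψ|²|`, which is square integrable. -/
lemma integrable_flux (hsm : ContDiff ℝ (⊤ : ℕ∞) ψ) (hfe : FiniteEnergy ψ)
    (hlim : Tendsto ψ (cocompact (Ed d)) (𝓝 1)) {s : ℝ → ℝ} (hs : Continuous s)
    (hs' : ∀ t, |t| ≤ 1 / 2 → 0 ≤ s t ∧ s t ^ 2 = 1 - t ^ 2) (i : Fin d) :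
    Integrable fun x => ((ψ x).re - s (ψ x).im) * (pd ψ i x).im := by
  have hu : Continuous fun x => (ψ x).re := continuous_re.comp hsm.continuous
  have hv : Continuous fun x => (ψ x).im := continuous_im.comp hsm.continuous
  have hp : Continuous fun x => (pd ψ i x).im :=
    continuous_im.comp (contDiff_pd_s6 hsm i).continuous
  have hcont : Continuous fun x => ((ψ x).re - s (ψ x).im) * (pd ψ i x).im :=
    (hu.sub (hs.comp hv)).mul hp
  have hg := (integrable_pd_sq hsm hfe i).add (integrable_potential hsm hfe)
  refine hcont.locallyIntegrable.integrable_of_isBigO_cocompact ?_ (hg.integrableAtFilter _)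
  have hlu : Tendsto (fun x => (ψ x).re) (cocompact (Ed d)) (𝓝 1) := by
    simpa [Function.comp_def] using (continuous_re.tendsto _).comp hlim
  have hlv : Tendsto (fun x => |(ψ x).im|) (cocompact (Ed d)) (𝓝 0) := by
    simpa [Function.comp_def] using ((continuous_im.tendsto _).comp hlim).abs
  refine Asymptotics.IsBigO.of_bound 1 ?_
  filter_upwards [hlu.eventually (eventually_ge_nhds (show (1 / 2 : ℝ) < 1 by norm_num)),
    hlv.eventually (eventually_le_nhds (show (0 : ℝ) < 1 / 2 by norm_num))] with x hx1 hx2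
  obtain ⟨h1, h2⟩ := hs' _ hx2
  have hn : ‖ψ x‖ ^ 2 = (ψ x).re ^ 2 + (ψ x).im ^ 2 := by
    rw [Complex.sq_norm, Complex.normSq_apply]; ring
  have hpi : |(pd ψ i x).im| ^ 2 ≤ ‖pd ψ i x‖ ^ 2 := by
    gcongr; exact abs_im_le_norm _
  have hF : |(ψ x).re - s (ψ x).im| ≤ 2 * |1 - ‖ψ x‖ ^ 2| := by
    have : 1 - ‖ψ x‖ ^ 2 = -(((ψ x).re - s (ψ x).im) * ((ψ x).re + s (ψ x).im)) := by
      rw [hn]; linear_combination -h2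
    rw [this, abs_neg, abs_mul, abs_of_nonneg (show 0 ≤ (ψ x).re + s (ψ x).im by linarith)]
    nlinarith [abs_nonneg ((ψ x).re - s (ψ x).im)]
  rw [norm_mul, Real.norm_eq_abs, Real.norm_eq_abs, one_mul, Pi.add_apply,
    Real.norm_of_nonneg (by positivity), ← sq_abs (1 - ‖ψ x‖ ^ 2)]
  calc _ ≤ 2 * |1 - ‖ψ x‖ ^ 2| * |(pd ψ i x).im| := by gcongr
    _ ≤ |(pd ψ i x).im| ^ 2 + |1 - ‖ψ x‖ ^ 2| ^ 2 := by
      nlinarith [sq_nonneg (|1 - ‖ψ x‖ ^ 2| - |(pd ψ i x).im|)]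
    _ ≤ _ := by gcongr

/-- Each transverse direction carries the same Dirichlet energy, equal to the Lagrangian. -/
lemma integral_pd_sq_eq_lagr [NeZero d] (hsm : ContDiff ℝ (⊤ : ℕ∞) ψ) (heq : GPeq c ψ)
    (hfe : FiniteEnergy ψ) (hlim : Tendsto ψ (cocompact (Ed d)) (𝓝 1))
    (hint : Integrable fun x => (pd ψ 0 x).im * ((ψ x).re - 1)) (j : Fin d) (hj : j ≠ 0) :
    ∫ x, ‖pd ψ j x‖ ^ 2 = lagr c ψ := by
  obtain ⟨s, hs, hs'⟩ := exists_smooth_circle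
  have hu : Sm fun x => (ψ x).re := reCLM.contDiff.comp hsm
  have hv : Sm fun x => (ψ x).im := imCLM.contDiff.comp hsm
  have hsq : ∀ z : ℂ, ‖z‖ ^ 2 = z.re * z.re + z.im * z.im := fun z => by
    rw [Complex.sq_norm, Complex.normSq_apply]
  have he : ∀ x, eReal (fun x => (ψ x).re) (fun x => (ψ x).im) x = eDen ψ x := by
    intro x
    unfold eReal eDen gradSq
    simp only [dd_re hsm, dd_im hsm, hsq]
    ring
  have hflux := integrable_flux hsm hfe hlim hs.continuous hs'
  have hcur : ∀ k x, current c s (fun x => (ψ x).re) (fun x => (ψ x).im) j k x =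
      ((pd ψ j x).re * (pd ψ k x).re + (pd ψ j x).im * (pd ψ k x).im)
      - (if k = j then 1 else 0) * eDen ψ x
      + ((if k = 0 then c else 0) * (((ψ x).re - s (ψ x).im) * (pd ψ j x).im)
      - (if k = j then c else 0) * (((ψ x).re - s (ψ x).im) * (pd ψ 0 x).im)) := by
    intro k x
    unfold current
    simp only [he, dd_re hsm, dd_im hsm]
  have hcre : ∀ k, Continuous fun x => (pd ψ k x).re := fun k =>
    continuous_re.comp (contDiff_pd_s6 hsm k).continuous
  have hcim : ∀ k, Continuous fun x => (pd ψ k x).im := fun k =>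
    continuous_im.comp (contDiff_pd_s6 hsm k).continuous
  have hTi : ∀ k, Integrable fun x =>
      (pd ψ j x).re * (pd ψ k x).re + (pd ψ j x).im * (pd ψ k x).im := by
    intro k
    refine ((integrable_pd_sq hsm hfe j).add (integrable_pd_sq hsm hfe k)).mono' ?_ ?_
    · exact (((hcre j).mul (hcre k)).add ((hcim j).mul (hcim k))).aestronglyMeasurable
    · refine Eventually.of_forall fun x => ?_
      rw [Pi.add_apply, hsq, hsq, Real.norm_eq_abs, abs_le]
      constructor <;>
        nlinarith [sq_nonneg ((pd ψ j x).re + (pd ψ k x).re),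
          sq_nonneg ((pd ψ j x).im + (pd ψ k x).im), sq_nonneg ((pd ψ j x).re - (pd ψ k x).re),
          sq_nonneg ((pd ψ j x).im - (pd ψ k x).im), sq_nonneg (pd ψ j x).re,
          sq_nonneg (pd ψ j x).im, sq_nonneg (pd ψ k x).re, sq_nonneg (pd ψ k x).im]
  have hY : ∀ k, Integrable (current c s (fun x => (ψ x).re) (fun x => (ψ x).im) j k) := by
    intro k
    rw [funext (hcur k)]
    exact ((hTi k).sub (Integrable.const_mul hfe _)).add
      (((hflux j).const_mul _).sub ((hflux 0).const_mul _))
  have hzero := integral_component_eq_zero _ (fun k => hu.current hs hv j k) hY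
    (div_current hs hu hv (gp_re hsm heq) (gp_im hsm heq) j) j
  simp only [hcur, if_neg hj, if_true, zero_mul, one_mul, zero_sub, ← hsq] at hzero
  have hmom : ∫ x, ((ψ x).re - s (ψ x).im) * (pd ψ 0 x).im = -mom ψ := by
    have hlv : Tendsto (fun x => (ψ x).im) (cocompact (Ed d)) (𝓝 0) := by
      simpa [Function.comp_def] using (continuous_im.tendsto _).comp hlim
    have hs0 : s 0 = 1 := by
      obtain ⟨h1, h2⟩ := hs' 0 (by simp)
      nlinarith
    have hdiff : Integrable fun x => (s (ψ x).im - 1) * (pd ψ 0 x).im := by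
      refine (hint.sub (hflux 0)).congr (Eventually.of_forall fun x => ?_)
      simp only [Pi.sub_apply]; ring
    have h0 := integral_comp_mul_dd_eq_zero hv hlv (h := fun t => s t - 1)
      (hs.continuous.sub continuous_const) (by simp [hs0]) 0
      (by simpa only [dd_im hsm] using hdiff)
    simp only [dd_im hsm] at h0
    rw [mom, neg_neg, ← add_zero (∫ x, ((ψ x).re - s (ψ x).im) * (pd ψ 0 x).im), ← h0,
      ← integral_add (hflux 0) hdiff]
    refine integral_congr_ae (Eventually.of_forall fun x => ?_)
    simp only; ring
  have hj2 := integrable_pd_sq hsm hfe j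
  have hsplit := integral_add (hj2.sub hfe) ((hflux 0).const_mul c).neg
  simp only [Pi.sub_apply, Pi.neg_apply] at hsplit
  rw [hsplit, integral_sub hj2 hfe, integral_neg, integral_const_mul, hmom] at hzero
  unfold lagr energy
  linarith

/-- A smooth function with limit `1` at infinity and one vanishing partial derivative is constant
along lines in that direction, hence equal to `1`. -/
lemma eq_one_of_pd_eq_zero (hsm : ContDiff ℝ (⊤ : ℕ∞) ψ)
    (hlim : Tendsto ψ (cocompact (Ed d)) (𝓝 1)) (j : Fin d) (h : ∀ x, pd ψ j x = 0) :
    ψ = fun _ => 1 := by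
  funext x
  let γ : ℝ → Ed d := fun t => x + t • EuclideanSpace.single j 1
  have hγ : ∀ t, HasDerivAt γ (EuclideanSpace.single j 1) t := by
    intro t
    simpa [γ] using ((hasDerivAt_id' t).smul_const (EuclideanSpace.single j (1 : ℝ))).const_add x
  have hd : ∀ t, HasDerivAt (ψ ∘ γ) 0 t := by
    intro t
    have := (hsm.differentiable (by simp) (γ t)).hasFDerivAt.comp_hasDerivAt t (hγ t)
    rwa [show fderiv ℝ ψ (γ t) (EuclideanSpace.single j 1) = 0 from h (γ t)] at this
  have hconst : ∀ t, ψ (γ t) = ψ x := by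
    intro t
    have := is_const_of_deriv_eq_zero (fun t => (hd t).differentiableAt)
      (fun t => (hd t).deriv) t 0
    simpa [γ] using this
  have htend : Tendsto γ atTop (cocompact (Ed d)) := by
    rw [← Metric.cobounded_eq_cocompact, ← tendsto_norm_atTop_iff_cobounded]
    refine tendsto_atTop_mono (f := fun t => |t| - ‖x‖) (fun t => ?_) ?_
    · have h1 := norm_sub_norm_le (t • EuclideanSpace.single j (1 : ℝ)) (-x)
      rw [norm_smul, PiLp.norm_single, norm_one, mul_one, Real.norm_eq_abs, norm_neg,
        sub_neg_eq_add, add_comm _ x] at h1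
      exact h1
    · exact tendsto_atTop_add_const_right _ _ tendsto_abs_atTop_atTop
  have h2 := hlim.comp htend
  refine tendsto_nhds_unique ?_ h2
  exact tendsto_const_nhds.congr fun t => (hconst t).symm

end pohozaev

/-- the Pohozaev-type identity `(d-3)A + (d-1)B = 0` coming from dilations
in the transverse variables, and its consequences for the Lagrangian. -/
theorem statement6 (d : ℕ) [NeZero d] (hd : d = 2 ∨ d = 3) (c : ℝ)
    (ψ : Ed d → ℂ) (hsm : ContDiff ℝ (⊤ : ℕ∞) ψ) (heq : GPeq c ψ)
    (hfe : FiniteEnergy ψ) (hlim : Tendsto ψ (cocompact (Ed d)) (𝓝 1))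
    (hint : Integrable fun x => (pd ψ 0 x).im * ((ψ x).re - 1)) :
    ∀ A B : ℝ,
      A = 1 / 2 * ∑ j ∈ Finset.univ.filter (fun j : Fin d => j ≠ 0), ∫ x, ‖pd ψ j x‖ ^ 2 →
      B = 1 / 2 * (∫ x, ‖pd ψ 0 x‖ ^ 2) + 1 / 4 * (∫ x, (1 - ‖ψ x‖ ^ 2) ^ 2)
        - c * mom ψ →
      ((d : ℝ) - 3) * A + ((d : ℝ) - 1) * B = 0 ∧
      lagr c ψ = 2 / ((d : ℝ) - 1) * A ∧ 0 ≤ lagr c ψ ∧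
      (lagr c ψ = 0 ↔ ψ = fun _ => 1) := by
  intro A B hA hB
  have hd2 : 2 ≤ d := by omega
  have hdr : (1 : ℝ) < d := by exact_mod_cast hd2
  have hI : ∀ j : Fin d, j ≠ 0 → ∫ x, ‖pd ψ j x‖ ^ 2 = lagr c ψ := fun j hj =>
    integral_pd_sq_eq_lagr hsm heq hfe hlim hint j hj
  have hA' : A = 1 / 2 * (((d : ℝ) - 1) * lagr c ψ) := by
    rw [hA, Finset.sum_congr rfl fun j hj => hI j (Finset.mem_filter.mp hj).2,
      Finset.sum_const, nsmul_eq_mul, Finset.filter_ne' Finset.univ (0 : Fin d),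
      Finset.card_erase_of_mem (Finset.mem_univ _), Finset.card_univ, Fintype.card_fin,
      Nat.cast_sub (by omega), Nat.cast_one]
  have hAB : lagr c ψ = A + B := by
    have hsplit : energy ψ = 1 / 2 * (∑ i, ∫ x, ‖pd ψ i x‖ ^ 2)
        + 1 / 4 * ∫ x, (1 - ‖ψ x‖ ^ 2) ^ 2 := by
      unfold energy eDen gradSq
      rw [integral_add, integral_const_mul, integral_const_mul, integral_finsetSum]
      · exact fun i _ => integrable_pd_sq hsm hfe i
      · exact (integrable_finsetSum _ fun i _ => integrable_pd_sq hsm hfe i).const_mul _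
      · exact (integrable_potential hsm hfe).const_mul _
    rw [lagr, hsplit, hA, hB, Finset.filter_ne' Finset.univ (0 : Fin d),
      ← Finset.add_sum_erase _ _ (Finset.mem_univ (0 : Fin d))]
    ring
  let j : Fin d := ⟨1, hd2⟩
  have hj : j ≠ 0 := by
    intro h
    have := congrArg Fin.val h
    simp [j] at this
  refine ⟨?_, ?_, ?_, ?_, ?_⟩
  · linear_combination -2 * hA' - ((d : ℝ) - 1) * hAB
  · rw [hA']
    field_simp [show (d : ℝ) - 1 ≠ 0 by linarith]
  · rw [← hI j hj]
    exact integral_nonneg fun x => by positivity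
  · intro h0
    rw [← hI j hj] at h0
    refine eq_one_of_pd_eq_zero hsm hlim j fun x => ?_
    have hc : Continuous fun x => ‖pd ψ j x‖ ^ 2 := (contDiff_pd_s6 hsm j).continuous.norm.pow 2
    have h1 := (integral_eq_zero_iff_of_nonneg (fun x => by positivity)
      (integrable_pd_sq hsm hfe j)).mp h0
    have h2 := congrFun (hc.ae_eq_iff_eq volume continuous_const |>.mp h1) x
    exact norm_eq_zero.mp (pow_eq_zero_iff two_ne_zero |>.mp h2)
  · intro h1
    rw [← hI j hj, h1]
    simp [pd]
end
end
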